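/- arXiv:2208.00236 — 3 statements merged into one kernel-verified Lean document; each statement's English description precedes it below -/
import Mathlib

section
/- Let N ≥ 2, 0 < α < N and p > (N+α)/N. There exists a constant C > 0, depending only on N, α, p and the growth and kernel constants (in particular not on λ), such that for every u ∈ E_λ: (i) Σ_G (R_α ∗ |u|^p)(x)|u(x)|^p ≤ C‖u‖_{2Np/(N+α)}^{2p} ≤ C‖u‖_{E_λ}^{2p}, and (ii) ‖R_α ∗ |u|^p‖_{2N/(N−α)} ≤ C‖u‖_{2Np/(N+α)}^{p}. -/
open scoped BigOperators ENNReal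
open Filter

noncomputable section

namespace Choquard

variable {G : Type*}

/-- The word metric on a group with generating set `S`. -/
def wordDist [Group G] (S : Finset G) (x y : G) : ℕ :=
  sInf {k : ℕ | ∃ l : List G, (∀ g ∈ l, g ∈ S) ∧ l.length = k ∧ x⁻¹ * y = l.prod}

/-- The closed ball of radius `r` about `c` in the word metric. -/
def ball [Group G] (S : Finset G) (c : G) (r : ℝ) : Set G :=
  {x | (wordDist S x c : ℝ) ≤ r}

/-- Polynomial growth of homogeneous dimension `N`. -/
def PolyGrowth [Group G] (S : Finset G) (N : ℕ) : Prop :=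
  ∃ C₁ C₂ : ℝ, 0 < C₁ ∧ 0 < C₂ ∧ ∀ r : ℝ, 1 ≤ r →
    C₁ * r ^ N ≤ ((ball S (1 : G) r).ncard : ℝ) ∧
    ((ball S (1 : G) r).ncard : ℝ) ≤ C₂ * r ^ N

/-- Riesz-type asymptotics for the kernel `R`. -/
def RieszKernel [Group G] (S : Finset G) (N : ℕ) (α : ℝ) (R : G → G → ℝ) : Prop :=
  (∀ x y, 0 < R x y) ∧
  ∃ c₁ c₂ : ℝ, 0 < c₁ ∧ 0 < c₂ ∧ ∀ x y : G, x ≠ y →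
    c₁ * (wordDist S x y : ℝ) ^ (α - (N : ℝ)) ≤ R x y ∧
    R x y ≤ c₂ * (wordDist S x y : ℝ) ^ (α - (N : ℝ))

/-- Convolution `(R ∗ f)(x) = Σ_{y ≠ x} R x y f y`. -/
def conv [DecidableEq G] (R : G → G → ℝ) (f : G → ℝ) (x : G) : ℝ :=
  ∑' y, if y = x then 0 else R x y * f y

/-- The convolution as an extended-nonnegative-real valued sum. -/
def convE [DecidableEq G] (R : G → G → ℝ) (f : G → ℝ) (x : G) : ℝ≥0∞ :=
  ∑' y, if y = x then 0 else ENNReal.ofReal (R x y * f y)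

/-- Membership in `ℓ^q(G)`. -/
def Memlp (q : ℝ) (u : G → ℝ) : Prop := Summable fun x => |u x| ^ q

/-- The `ℓ^q` norm. -/
def lpNorm (q : ℝ) (u : G → ℝ) : ℝ := (∑' x, |u x| ^ q) ^ (1 / q)

/-- The `ℓ^∞` norm. -/
def supNorm (u : G → ℝ) : ℝ := ⨆ x, |u x|

/-- The graph Laplacian `Δu(x) = Σ_{s ∈ S} (u(xs) - u(x))`. -/
def lap [Group G] (S : Finset G) (u : G → ℝ) (x : G) : ℝ :=
  ∑ s ∈ S, (u (x * s) - u x)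

/-- The gradient form `∇u∇v(x) = (1/2) Σ_{s ∈ S} (u(xs)-u(x))(v(xs)-v(x))`. -/
def grad [Group G] (S : Finset G) (u v : G → ℝ) (x : G) : ℝ :=
  (1 / 2) * ∑ s ∈ S, (u (x * s) - u x) * (v (x * s) - v x)

/-- The density `|Δu|² + |∇u|² + (1 + λa)u²`. -/
def eDensity [Group G] (S : Finset G) (a : G → ℝ) (lam : ℝ) (u : G → ℝ) (x : G) : ℝ :=
  (lap S u x) ^ 2 + grad S u u x + (1 + lam * a x) * (u x) ^ 2

/-- Membership in the space `E_λ`. -/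
def MemE [Group G] (S : Finset G) (a : G → ℝ) (lam : ℝ) (u : G → ℝ) : Prop :=
  Summable (eDensity S a lam u)

/-- `‖u‖²_{E_λ}`. -/
def normEsq [Group G] (S : Finset G) (a : G → ℝ) (lam : ℝ) (u : G → ℝ) : ℝ :=
  ∑' x, eDensity S a lam u x

/-- `‖u‖_{E_λ}`. -/
def normE [Group G] (S : Finset G) (a : G → ℝ) (lam : ℝ) (u : G → ℝ) : ℝ :=
  Real.sqrt (normEsq S a lam u)

/-- The inner product `⟨u, v⟩_{E_λ}`. -/
def innerE [Group G] (S : Finset G) (a : G → ℝ) (lam : ℝ) (u v : G → ℝ) : ℝ :=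
  ∑' x, (lap S u x * lap S v x + grad S u v x + (1 + lam * a x) * (u x * v x))

/-- The nonlocal term `Σ_G (R_α ∗ |u|^p)|u|^p`. -/
def Dterm [DecidableEq G] (R : G → G → ℝ) (p : ℝ) (u : G → ℝ) : ℝ :=
  ∑' x, conv R (fun y => |u y| ^ p) x * |u x| ^ p

/-- The nonlocal pairing `Σ_G (R_α ∗ |u|^p)|u|^{p-2} u v`. -/
def Kterm [DecidableEq G] (R : G → G → ℝ) (p : ℝ) (u v : G → ℝ) : ℝ :=
  ∑' x, conv R (fun y => |u y| ^ p) x * (|u x| ^ (p - 2) * u x * v x)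

/-- The energy functional `J_λ`. -/
def Jfun [Group G] [DecidableEq G] (S : Finset G) (a : G → ℝ) (lam : ℝ)
    (R : G → G → ℝ) (p : ℝ) (u : G → ℝ) : ℝ :=
  (1 / 2) * normEsq S a lam u - (1 / (2 * p)) * Dterm R p u

/-- The derivative pairing `(J'_λ(u), v)`. -/
def Jd [Group G] [DecidableEq G] (S : Finset G) (a : G → ℝ) (lam : ℝ)
    (R : G → G → ℝ) (p : ℝ) (u v : G → ℝ) : ℝ :=
  innerE S a lam u v - Kterm R p u v

/-- The Nehari manifold `N_λ`. -/
def nehari [Group G] [DecidableEq G] (S : Finset G) (a : G → ℝ) (lam : ℝ)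
    (R : G → G → ℝ) (p : ℝ) : Set (G → ℝ) :=
  {u | MemE S a lam u ∧ u ≠ 0 ∧ Jd S a lam R p u u = 0}

/-- `m_λ = inf_{N_λ} J_λ`. -/
def mlam [Group G] [DecidableEq G] (S : Finset G) (a : G → ℝ) (lam : ℝ)
    (R : G → G → ℝ) (p : ℝ) : ℝ :=
  sInf (Jfun S a lam R p '' nehari S a lam R p)

/-- The norm of `J'_λ(u)` in the dual space `E_λ*`. -/
def dualNorm [Group G] [DecidableEq G] (S : Finset G) (a : G → ℝ) (lam : ℝ)
    (R : G → G → ℝ) (p : ℝ) (u : G → ℝ) : ℝ :=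
  sSup {t : ℝ | ∃ v, MemE S a lam v ∧ normEsq S a lam v ≤ 1 ∧ t = |Jd S a lam R p u v|}

/-- `(PS)_c` sequence for `J_λ`. -/
def PSseq [Group G] [DecidableEq G] (S : Finset G) (a : G → ℝ) (lam : ℝ)
    (R : G → G → ℝ) (p : ℝ) (c : ℝ) (U : ℕ → G → ℝ) : Prop :=
  (∀ n, MemE S a lam (U n)) ∧
  Tendsto (fun n => Jfun S a lam R p (U n)) atTop (nhds c) ∧
  Tendsto (fun n => dualNorm S a lam R p (U n)) atTop (nhds 0)

/-- The Cayley graph of `(G, S)`. -/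
def cayley [Group G] (S : Finset G) : SimpleGraph G :=
  SimpleGraph.fromRel (fun x y => x⁻¹ * y ∈ S)

/-- Condition (A₁): the potential well `Ω = {a = 0}` is nonempty, finite and connected. -/
def CondA1 [Group G] (S : Finset G) (a : G → ℝ) : Prop :=
  {x | a x = 0}.Nonempty ∧ {x | a x = 0}.Finite ∧
  ((cayley S).induce {x | a x = 0}).Connected

/-- Condition (A₂): some sublevel set `{a ≤ M}` is finite and nonempty. -/
def CondA2 (a : G → ℝ) : Prop :=
  ∃ M : ℝ, 0 < M ∧ {x | a x ≤ M}.Finite ∧ {x | a x ≤ M}.Nonempty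

/-- The density `|Δu|² + |∇u|² + u²` of the `W^{2,2}` norm. -/
def wDensity [Group G] (S : Finset G) (u : G → ℝ) (x : G) : ℝ :=
  (lap S u x) ^ 2 + grad S u u x + (u x) ^ 2

/-- Membership in `W^{2,2}(G)`. -/
def MemW [Group G] (S : Finset G) (u : G → ℝ) : Prop := Summable (wDensity S u)

/-- `‖u‖²_{W^{2,2}}`. -/
def normWsq [Group G] (S : Finset G) (u : G → ℝ) : ℝ := ∑' x, wDensity S u x

/-- Membership in `E(Ω)`: vanishing outside `Ω`. -/
def MemEOm (Ω : Set G) (u : G → ℝ) : Prop := ∀ x ∉ Ω, u x = 0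

/-- `‖u‖²_{E(Ω)}`. -/
def normOmSq [Group G] (S : Finset G) (Ω : Set G) (u : G → ℝ) : ℝ :=
  (∑' x, ((lap S u x) ^ 2 + grad S u u x)) + ∑' x : Ω, (u (x : G)) ^ 2

/-- The nonlocal term over `Ω`. -/
def DtermOm [DecidableEq G] (Ω : Set G) (R : G → G → ℝ) (p : ℝ) (u : G → ℝ) : ℝ :=
  ∑' x : Ω, conv R (fun y => |u y| ^ p) (x : G) * |u (x : G)| ^ p

/-- The limiting energy functional `J_Ω`. -/
def JOm [Group G] [DecidableEq G] (S : Finset G) (Ω : Set G) (R : G → G → ℝ) (p : ℝ)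
    (u : G → ℝ) : ℝ :=
  (1 / 2) * normOmSq S Ω u - (1 / (2 * p)) * DtermOm Ω R p u

/-- The derivative pairing `(J'_Ω(u), v)`. -/
def JdOm [Group G] [DecidableEq G] (S : Finset G) (Ω : Set G) (R : G → G → ℝ) (p : ℝ)
    (u v : G → ℝ) : ℝ :=
  (∑' x, (lap S u x * lap S v x + grad S u v x)) + (∑' x : Ω, u (x : G) * v (x : G))
    - ∑' x : Ω, conv R (fun y => |u y| ^ p) (x : G) * (|u (x : G)| ^ (p - 2) * u (x : G) * v (x : G))

/-- The Nehari manifold `N_Ω`. -/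
def nehariOm [Group G] [DecidableEq G] (S : Finset G) (Ω : Set G) (R : G → G → ℝ)
    (p : ℝ) : Set (G → ℝ) :=
  {u | MemEOm Ω u ∧ u ≠ 0 ∧ JdOm S Ω R p u u = 0}

/-- `m_Ω = inf_{N_Ω} J_Ω`. -/
def mOm [Group G] [DecidableEq G] (S : Finset G) (Ω : Set G) (R : G → G → ℝ) (p : ℝ) : ℝ :=
  sInf (JOm S Ω R p '' nehariOm S Ω R p)


lemma hls_level {G : Type*} (κ : G → G → ℝ≥0∞) (C γ r : ℝ) (hC : 0 < C)
    (hγ0 : 0 < γ) (hγ1 : γ < 1) (hr : r = 2 / (1 + γ))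
    (H : ∀ (x : G) (A : Set G) (M : ℝ), 0 < M → (∑' y, A.indicator (fun _ => (1 : ℝ≥0∞)) y) ≤ ENNReal.ofReal M →
      ∑' y, A.indicator (κ x) y ≤ ENNReal.ofReal (C * M ^ γ)) :
    ∃ D : ℝ, 0 < D ∧ ∀ g : G → ℝ≥0∞, (∑' y, g y ^ r) ≤ 1 → ∀ (x : G) (t : ℝ), 0 < t →
      ∑' y, {y | g y ≤ ENNReal.ofReal t}.indicator (fun y => κ x y * g y) y
        ≤ ENNReal.ofReal (D * t ^ (r - 1)) := by
  have h1γ : 0 < 1 + γ := by linarith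
  have hr1 : 1 < r := by rw [hr, lt_div_iff₀ h1γ]; linarith
  have hr0 : 0 < r := by linarith
  have hrγ : 1 - r * γ = r - 1 := by rw [hr]; field_simp; ring
  set q : ℝ := (1 / 2 : ℝ) ^ (r - 1) with hq
  have hq0 : 0 < q := by positivity
  have hq1 : q < 1 := Real.rpow_lt_one (by norm_num) (by norm_num) (by linarith)
  have hq1' : 0 < 1 - q := by linarith
  refine ⟨C * 2 ^ (r * γ) * (1 - q)⁻¹, by positivity, ?_⟩
  intro g hg x t ht
  set A : ℕ → Set G := fun n => {y | ENNReal.ofReal (t * (1 / 2) ^ (n + 1)) < g y} with hA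
  have hpt : ∀ y, {y | g y ≤ ENNReal.ofReal t}.indicator (fun y => κ x y * g y) y ≤
      ∑' n, ENNReal.ofReal (t * (1 / 2) ^ n) * (A n).indicator (κ x) y := by
    intro y
    by_cases hy : g y ≤ ENNReal.ofReal t
    · rw [Set.indicator_of_mem (by exact hy)]
      by_cases h0 : g y = 0
      · simp [h0]
      have htop : g y ≠ ⊤ := ne_top_of_le_ne_top ENNReal.ofReal_ne_top hy
      set v := (g y).toReal with hv
      have hgv : g y = ENNReal.ofReal v := (ENNReal.ofReal_toReal htop).symm
      have hv0 : 0 < v := ENNReal.toReal_pos h0 htop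
      have hvt : v ≤ t := by
        rw [hgv] at hy
        exact (ENNReal.ofReal_le_ofReal_iff ht.le).1 hy
      obtain ⟨n, hn1, hn2⟩ := exists_nat_pow_near_of_lt_one (x := v / t) (y := (1 / 2 : ℝ))
        (by positivity) (by rw [div_le_one ht]; exact hvt) (by norm_num) (by norm_num)
      rw [lt_div_iff₀ ht] at hn1
      rw [div_le_iff₀ ht] at hn2
      refine le_trans ?_ (ENNReal.le_tsum n)
      have hmem : y ∈ A n := by
        change ENNReal.ofReal (t * (1 / 2) ^ (n + 1)) < g y
        rw [hgv, ENNReal.ofReal_lt_ofReal_iff hv0]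
        linarith
      rw [Set.indicator_of_mem hmem, mul_comm, hgv]
      gcongr
      linarith
    · rw [Set.indicator_of_notMem (by exact hy)]
      exact zero_le
  have hcheb : ∀ n, (∑' y, (A n).indicator (fun _ => (1 : ℝ≥0∞)) y) ≤
      ENNReal.ofReal ((t * (1 / 2) ^ (n + 1)) ^ (-r)) := by
    intro n
    have hs : 0 < t * (1 / 2 : ℝ) ^ (n + 1) := by positivity
    set s := t * (1 / 2 : ℝ) ^ (n + 1) with hsdef
    calc (∑' y, (A n).indicator (fun _ => (1 : ℝ≥0∞)) y)
        ≤ ∑' y, ENNReal.ofReal (s ^ (-r)) * g y ^ r := by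
          refine ENNReal.tsum_le_tsum fun y => ?_
          by_cases hy : y ∈ A n
          · rw [Set.indicator_of_mem hy]
            have hy' : ENNReal.ofReal s ≤ g y := le_of_lt hy
            calc (1 : ℝ≥0∞) = ENNReal.ofReal (s ^ (-r)) * ENNReal.ofReal s ^ r := by
                  rw [ENNReal.ofReal_rpow_of_pos hs, ← ENNReal.ofReal_mul (by positivity),
                    ← Real.rpow_add hs]
                  simp
              _ ≤ _ := by gcongr
          · rw [Set.indicator_of_notMem hy]; exact zero_le
      _ = ENNReal.ofReal (s ^ (-r)) * ∑' y, g y ^ r := ENNReal.tsum_mul_left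
      _ ≤ ENNReal.ofReal (s ^ (-r)) * 1 := by gcongr
      _ = _ := mul_one _
  calc _ ≤ ∑' y, ∑' n, ENNReal.ofReal (t * (1 / 2) ^ n) * (A n).indicator (κ x) y :=
        ENNReal.tsum_le_tsum hpt
    _ = ∑' n, ENNReal.ofReal (t * (1 / 2) ^ n) * ∑' y, (A n).indicator (κ x) y := by
        rw [ENNReal.tsum_comm]
        simp_rw [ENNReal.tsum_mul_left]
    _ ≤ ∑' n : ℕ, ENNReal.ofReal (C * 2 ^ (r * γ) * t ^ (r - 1) * q ^ n) := by
        refine ENNReal.tsum_le_tsum fun n => ?_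
        refine (mul_le_mul_right (H x (A n) _ (by positivity) (hcheb n)) _).trans ?_
        rw [← ENNReal.ofReal_mul (by positivity)]
        apply le_of_eq
        congr 1
        have e1 : ((t * (1 / 2 : ℝ) ^ (n + 1)) ^ (-r)) ^ γ
            = t ^ (-(r * γ)) * ((1/2 : ℝ) ^ n) ^ (-(r * γ)) * 2 ^ (r * γ) := by
          rw [← Real.rpow_mul (by positivity), Real.mul_rpow ht.le (by positivity), pow_succ,
            Real.mul_rpow (by positivity) (by norm_num), ← mul_assoc, neg_mul]
          congr 1
          rw [one_div, Real.inv_rpow (by norm_num), Real.rpow_neg (by norm_num), inv_inv]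
        have e2 : t ^ (r - 1) = t * t ^ (-(r * γ)) := by
          rw [← hrγ, sub_eq_add_neg, Real.rpow_add ht, Real.rpow_one]
        have e3 : q ^ n = (1/2 : ℝ) ^ n * ((1/2 : ℝ) ^ n) ^ (-(r * γ)) := by
          have hp : (0:ℝ) < (1/2 : ℝ) ^ n := by positivity
          have : q ^ n = ((1/2 : ℝ) ^ n) ^ (r - 1) := by
            rw [hq, ← Real.rpow_natCast, ← Real.rpow_mul (by norm_num), mul_comm,
              Real.rpow_mul (by norm_num), Real.rpow_natCast]
          rw [this, ← hrγ, sub_eq_add_neg, Real.rpow_add hp, Real.rpow_one]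
        rw [e1, e2, e3]
        ring
    _ = ENNReal.ofReal (∑' n : ℕ, C * 2 ^ (r * γ) * t ^ (r - 1) * q ^ n) := by
        rw [ENNReal.ofReal_tsum_of_nonneg]
        · intro n; positivity
        · exact (summable_geometric_of_lt_one hq0.le hq1).mul_left _
    _ = _ := by
        rw [tsum_mul_left, tsum_geometric_of_lt_one hq0.le hq1]
        congr 1; ring

lemma hls_bil1 {G : Type*} (κ : G → G → ℝ≥0∞) (hsym : ∀ x y, κ x y = κ y x) (C γ r : ℝ) (hC : 0 < C)
    (hγ0 : 0 < γ) (hγ1 : γ < 1) (hr : r = 2 / (1 + γ))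
    (H : ∀ (x : G) (A : Set G) (M : ℝ), 0 < M → (∑' y, A.indicator (fun _ => (1 : ℝ≥0∞)) y) ≤ ENNReal.ofReal M →
      ∑' y, A.indicator (κ x) y ≤ ENNReal.ofReal (C * M ^ γ)) :
    ∃ D : ℝ, 0 < D ∧ ∀ f g : G → ℝ≥0∞, (∑' y, f y ^ r) ≤ 1 → (∑' y, g y ^ r) ≤ 1 →
      ∑' x, ∑' y, κ x y * g y * f x ≤ ENNReal.ofReal D := by
  have h1γ : 0 < 1 + γ := by linarith
  have hr1 : 1 < r := by rw [hr, lt_div_iff₀ h1γ]; linarith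
  obtain ⟨D, hD, HD⟩ := hls_level κ C γ r hC hγ0 hγ1 hr H
  refine ⟨2 * D, by positivity, ?_⟩
  have key : ∀ f g : G → ℝ≥0∞, (∑' y, f y ^ r) ≤ 1 → (∑' y, g y ^ r) ≤ 1 →
      ∑' x, ∑' y, {y | g y ≤ f x}.indicator (fun y => κ x y * g y) y * f x ≤ ENNReal.ofReal D := by
    intro f g hf hg
    calc _ ≤ ∑' x, ENNReal.ofReal D * f x ^ r := by
          refine ENNReal.tsum_le_tsum fun x => ?_
          rw [ENNReal.tsum_mul_right]
          by_cases h0 : f x = 0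
          · simp [h0]
          have htop : f x ≠ ⊤ := by
            intro h
            have h1 : f x ^ r ≤ 1 := (ENNReal.le_tsum x).trans hf
            rw [h, ENNReal.top_rpow_of_pos (by linarith)] at h1
            simp at h1
          have hv0 : 0 < (f x).toReal := ENNReal.toReal_pos h0 htop
          have hfv : f x = ENNReal.ofReal (f x).toReal := (ENNReal.ofReal_toReal htop).symm
          set v := (f x).toReal with hv
          rw [hfv]
          refine (mul_le_mul_left (HD g hg x v hv0) _).trans ?_
          rw [← ENNReal.ofReal_mul (by positivity), ENNReal.ofReal_rpow_of_pos hv0,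
            ← ENNReal.ofReal_mul (by positivity)]
          apply le_of_eq
          congr 1
          rw [mul_assoc, ← Real.rpow_add_one hv0.ne']
          simp
      _ = ENNReal.ofReal D * ∑' x, f x ^ r := ENNReal.tsum_mul_left
      _ ≤ ENNReal.ofReal D * 1 := by gcongr
      _ = _ := mul_one _
  intro f g hf hg
  calc _ ≤ ∑' x, ∑' y, ({y | g y ≤ f x}.indicator (fun y => κ x y * g y) y * f x +
        {x | f x ≤ g y}.indicator (fun x => κ y x * f x) x * g y) := by
        refine ENNReal.tsum_le_tsum fun x => ENNReal.tsum_le_tsum fun y => ?_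
        rcases le_total (g y) (f x) with h | h
        · rw [Set.indicator_of_mem (by exact h)]
          exact le_self_add
        · rw [Set.indicator_of_mem (s := {x | f x ≤ g y}) (by exact h), hsym x y]
          refine le_trans (le_of_eq ?_) le_add_self
          ring
    _ = (∑' x, ∑' y, {y | g y ≤ f x}.indicator (fun y => κ x y * g y) y * f x) +
        ∑' y, ∑' x, {x | f x ≤ g y}.indicator (fun x => κ y x * f x) x * g y := by
        simp_rw [ENNReal.tsum_add]
        rw [ENNReal.tsum_comm (f := fun y x => {x | f x ≤ g y}.indicator (fun x => κ y x * f x) x * g y)]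
    _ ≤ ENNReal.ofReal D + ENNReal.ofReal D := add_le_add (key f g hf hg) (key g f hg hf)
    _ = _ := by rw [← ENNReal.ofReal_add hD.le hD.le, two_mul]

lemma hls_bil {G : Type*} (κ : G → G → ℝ≥0∞) (D r : ℝ) (hr : 0 < r)
    (H : ∀ f g : G → ℝ≥0∞, (∑' y, f y ^ r) ≤ 1 → (∑' y, g y ^ r) ≤ 1 →
      ∑' x, ∑' y, κ x y * g y * f x ≤ ENNReal.ofReal D)
    (f g : G → ℝ≥0∞) (hf : (∑' y, f y ^ r) ≠ ⊤) (hg : (∑' y, g y ^ r) ≠ ⊤) :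
    ∑' x, ∑' y, κ x y * g y * f x ≤
      ENNReal.ofReal D * (∑' y, g y ^ r) ^ (1 / r) * (∑' y, f y ^ r) ^ (1 / r) := by
  have hz : ∀ f : G → ℝ≥0∞, (∑' y, f y ^ r) = 0 → ∀ y, f y = 0 := by
    intro f h y
    have := ENNReal.tsum_eq_zero.1 h y
    rw [ENNReal.rpow_eq_zero_iff_of_pos hr] at this
    exact this
  by_cases hf0 : (∑' y, f y ^ r) = 0
  · simp [hz f hf0]
  by_cases hg0 : (∑' y, g y ^ r) = 0
  · simp [hz g hg0]
  have norm1 : ∀ f : G → ℝ≥0∞, (∑' y, f y ^ r) ≠ 0 → (∑' y, f y ^ r) ≠ ⊤ →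
      (∑' y, (((∑' y, f y ^ r) ^ (1 / r))⁻¹ * f y) ^ r) ≤ 1 := by
    intro f h0 ht
    simp_rw [ENNReal.mul_rpow_of_nonneg _ _ hr.le]
    rw [ENNReal.tsum_mul_left, ← ENNReal.inv_rpow, ← ENNReal.rpow_mul, one_div_mul_cancel hr.ne',
      ENNReal.rpow_one, ENNReal.inv_mul_cancel h0 ht]
  have := H _ _ (norm1 f hf0 hf) (norm1 g hg0 hg)
  have pos : ∀ f : G → ℝ≥0∞, (∑' y, f y ^ r) ≠ 0 → (∑' y, f y ^ r) ≠ ⊤ →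
      (∑' y, f y ^ r) ^ (1 / r) ≠ 0 ∧ (∑' y, f y ^ r) ^ (1 / r) ≠ ⊤ := by
    intro f h0 ht
    constructor
    · simp [ENNReal.rpow_eq_zero_iff, h0, ht]
    · simp [ENNReal.rpow_eq_top_iff, h0, ht]
  obtain ⟨f1, f2⟩ := pos f hf0 hf
  obtain ⟨g1, g2⟩ := pos g hg0 hg
  set F := (∑' y, f y ^ r) ^ (1 / r)
  set K := (∑' y, g y ^ r) ^ (1 / r)
  have e : ∀ x y, κ x y * (K⁻¹ * g y) * (F⁻¹ * f x) = (K⁻¹ * F⁻¹) * (κ x y * g y * f x) := by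
    intro x y; ring
  simp_rw [e, ENNReal.tsum_mul_left] at this
  calc ∑' x, ∑' y, κ x y * g y * f x
      = (K * K⁻¹) * (F * F⁻¹) * ∑' x, ∑' y, κ x y * g y * f x := by
        rw [ENNReal.mul_inv_cancel f1 f2, ENNReal.mul_inv_cancel g1 g2]; simp
    _ = K * F * (K⁻¹ * F⁻¹ * ∑' x, ∑' y, κ x y * g y * f x) := by ring
    _ ≤ K * F * ENNReal.ofReal D := by gcongr
    _ = _ := by ring

lemma hls_dual {G : Type*} (h : G → ℝ≥0∞) (B : ℝ≥0∞) (hB : B ≠ ⊤) (r s : ℝ) (hr : 1 < r) (hs : 1 < s)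
    (hrs : 1 / r + 1 / s = 1)
    (H : ∀ f : G → ℝ≥0∞, (∑' y, f y ^ r) ≠ ⊤ → ∑' x, h x * f x ≤ B * (∑' y, f y ^ r) ^ (1 / r)) :
    (∑' x, h x ^ s) ^ (1 / s) ≤ B := by
  classical
  have hr0 : 0 < r := by linarith
  have hs0 : 0 < s := by linarith
  have hmul : (s - 1) * r = s := by field_simp at hrs; linarith
  have hsr : s - 1 = s / r := by rw [eq_div_iff hr0.ne', hmul]
  have hfin : ∀ x, h x ≠ ⊤ := by
    intro x
    have h2 : (∑' y, (Pi.single x 1 : G → ℝ≥0∞) y ^ r) = 1 := by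
      rw [tsum_eq_single x]
      · simp
      · intro y hy; simp [Pi.single_eq_of_ne hy, hr0]
    have h1 := H (Pi.single x 1) (by rw [h2]; simp)
    rw [h2, ENNReal.one_rpow, mul_one] at h1
    have h3 : h x ≤ ∑' y, h y * (Pi.single x 1 : G → ℝ≥0∞) y := by
      refine le_trans ?_ (ENNReal.le_tsum x)
      simp
    exact ne_top_of_le_ne_top hB (h3.trans h1)
  have main : (∑' x, h x ^ s) ≤ B ^ s := by
    rw [ENNReal.tsum_eq_iSup_sum]
    refine iSup_le fun T => ?_
    set Q := ∑ x ∈ T, h x ^ s with hQ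
    by_cases hQ0 : Q = 0
    · rw [hQ0]; exact zero_le
    have hQt : Q ≠ ⊤ := by
      rw [hQ]
      exact ENNReal.sum_ne_top.2 fun x _ => ENNReal.rpow_ne_top_of_nonneg hs0.le (hfin x)
    set f : G → ℝ≥0∞ := fun x => if x ∈ T then h x ^ (s - 1) else 0 with hfdef
    have e1 : (∑' y, f y ^ r) = Q := by
      rw [tsum_eq_sum (s := T)]
      · refine Finset.sum_congr rfl fun x hx => ?_
        simp only [hfdef, if_pos hx]
        rw [← ENNReal.rpow_mul, hmul]
      · intro x hx
        simp [hfdef, hx, hr0]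
    have e2 : ∑' x, h x * f x = Q := by
      rw [tsum_eq_sum (s := T)]
      · refine Finset.sum_congr rfl fun x hx => ?_
        simp only [hfdef, if_pos hx]
        nth_rewrite 1 [← ENNReal.rpow_one (h x)]
        rw [← ENNReal.rpow_add_of_nonneg _ _ (by norm_num) (by linarith)]
        congr 1; ring
      · intro x hx
        simp [hfdef, hx]
    have h1 := H f (by rw [e1]; exact hQt)
    rw [e1, e2] at h1
    have hp0 : Q ^ (1 / r) ≠ 0 := by simp [ENNReal.rpow_eq_zero_iff, hQ0, hQt]
    have hpt : Q ^ (1 / r) ≠ ⊤ := by simp [ENNReal.rpow_eq_top_iff, hQ0, hQt]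
    have h2 : Q ^ (1 / s) ≤ B := by
      have : Q = Q ^ (1 / s) * Q ^ (1 / r) := by
        rw [← ENNReal.rpow_add _ _ hQ0 hQt, add_comm, hrs, ENNReal.rpow_one]
      nth_rewrite 1 [this] at h1
      exact (ENNReal.mul_le_mul_iff_left hp0 hpt).1 h1
    calc Q = (Q ^ (1 / s)) ^ s := by
          rw [← ENNReal.rpow_mul, one_div_mul_cancel hs0.ne', ENNReal.rpow_one]
      _ ≤ B ^ s := by gcongr
  calc _ ≤ (B ^ s) ^ (1 / s) := by gcongr
    _ = B := by rw [← ENNReal.rpow_mul, mul_one_div_cancel hs0.ne', ENNReal.rpow_one]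

lemma riesz_set_bound {G : Type*} (d : G → G → ℕ) (N : ℕ) (hN : 2 ≤ N) (α : ℝ) (hα0 : 0 < α)
    (hαN : α < (N : ℝ)) (c C₂ : ℝ) (hc : 0 < c) (hC₂ : 0 < C₂)
    (κ : G → G → ℝ≥0∞)
    (hκ : ∀ x y, κ x y = if d x y = 0 then 0 else ENNReal.ofReal (c * (d x y : ℝ) ^ (α - (N : ℝ))))
    (hball : ∀ (x : G) (ρ : ℝ), 1 ≤ ρ →
      (∑' y, {y | (d x y : ℝ) ≤ ρ}.indicator (fun _ => (1 : ℝ≥0∞)) y) ≤ ENNReal.ofReal (C₂ * ρ ^ N)) :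
    ∃ C : ℝ, 0 < C ∧ ∀ (x : G) (A : Set G) (M : ℝ), 0 < M →
      (∑' y, A.indicator (fun _ => (1 : ℝ≥0∞)) y) ≤ ENNReal.ofReal M →
      ∑' y, A.indicator (κ x) y ≤ ENNReal.ofReal (C * M ^ (α / (N : ℝ))) := by
  have hN0 : (0 : ℝ) < N := by linarith
  have h2α : (2 : ℝ) ^ (-α) < 1 := Real.rpow_lt_one_of_one_lt_of_neg (by norm_num) (by linarith)
  have h2α' : 0 < 1 - (2 : ℝ) ^ (-α) := by linarith
  set K : ℝ := c * C₂ * 2 ^ ((N : ℝ) - α) / (1 - 2 ^ (-α)) with hK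
  have hK0 : 0 < K := by positivity
  have hκle : ∀ (x y : G) (ρ : ℝ), 0 < ρ → ρ ≤ d x y →
      κ x y ≤ ENNReal.ofReal (c * ρ ^ (α - (N : ℝ))) := by
    intro x y ρ hρ h
    rw [hκ]
    split_ifs with h0
    · exact zero_le
    · apply ENNReal.ofReal_le_ofReal
      apply mul_le_mul_of_nonneg_left _ hc.le
      exact Real.rpow_le_rpow_of_nonpos hρ h (by linarith)
  have hsmall : ∀ (x : G) (ρ : ℝ), ρ < 1 →
      ∑' y, {y | (d x y : ℝ) ≤ ρ}.indicator (κ x) y = 0 := by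
    intro x ρ hρ
    rw [ENNReal.tsum_eq_zero]
    intro y
    by_cases hy : (d x y : ℝ) ≤ ρ
    · have : d x y = 0 := by
        have : (d x y : ℝ) < 1 := by linarith
        exact_mod_cast Nat.lt_one_iff.1 (by exact_mod_cast this)
      rw [Set.indicator_of_mem (by exact hy), hκ, if_pos this]
    · exact Set.indicator_of_notMem (by exact hy) _
  have hnear : ∀ (n : ℕ) (x : G) (ρ : ℝ), 0 < ρ → ρ < 2 ^ n →
      ∑' y, {y | (d x y : ℝ) ≤ ρ}.indicator (κ x) y ≤ ENNReal.ofReal (K * ρ ^ α) := by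
    intro n
    induction n with
    | zero =>
      intro x ρ h0 h1
      rw [hsmall x ρ (by simpa using h1)]
      exact zero_le
    | succ n ih =>
      intro x ρ h0 h1
      rcases lt_or_ge ρ 1 with h | h
      · rw [hsmall x ρ h]
        exact zero_le
      have hpt : ∀ y, {y | (d x y : ℝ) ≤ ρ}.indicator (κ x) y ≤
          {y | (d x y : ℝ) ≤ ρ / 2}.indicator (κ x) y +
          ENNReal.ofReal (c * (ρ / 2) ^ (α - (N : ℝ))) *
            {y | (d x y : ℝ) ≤ ρ}.indicator (fun _ => (1 : ℝ≥0∞)) y := by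
        intro y
        by_cases hy : (d x y : ℝ) ≤ ρ
        · rw [Set.indicator_of_mem (s := {y | (d x y : ℝ) ≤ ρ}) (by exact hy),
            Set.indicator_of_mem (s := {y | (d x y : ℝ) ≤ ρ}) (by exact hy), mul_one]
          by_cases hy2 : (d x y : ℝ) ≤ ρ / 2
          · rw [Set.indicator_of_mem (by exact hy2)]
            exact le_self_add
          · exact (hκle x y (ρ / 2) (by positivity) (not_le.1 hy2).le).trans le_add_self
        · rw [Set.indicator_of_notMem (by exact hy)]
          exact zero_le
      refine (ENNReal.tsum_le_tsum hpt).trans ?_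
      rw [ENNReal.tsum_add, ENNReal.tsum_mul_left]
      refine (add_le_add (ih x (ρ / 2) (by positivity) (by rw [pow_succ] at h1; linarith))
        (mul_le_mul_right (hball x ρ h) _)).trans ?_
      rw [← ENNReal.ofReal_mul (by positivity), ← ENNReal.ofReal_add (by positivity) (by positivity)]
      apply le_of_eq
      congr 1
      have e1 : (ρ / 2) ^ α = ρ ^ α * 2 ^ (-α) := by
        rw [Real.div_rpow h0.le (by norm_num), Real.rpow_neg (by norm_num)]; rfl
      have e2 : (ρ / 2) ^ (α - (N : ℝ)) * ρ ^ N = ρ ^ α * 2 ^ ((N : ℝ) - α) := by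
        rw [Real.div_rpow h0.le (by norm_num), ← neg_sub (N : ℝ) α, Real.rpow_neg (by norm_num : (0:ℝ) ≤ 2),
          div_inv_eq_mul, mul_right_comm, ← Real.rpow_natCast, ← Real.rpow_add h0]
        congr 2; ring
      have e3 : K * (1 - 2 ^ (-α)) = c * C₂ * 2 ^ ((N : ℝ) - α) := by
        rw [hK]; field_simp
      calc K * (ρ / 2) ^ α + c * (ρ / 2) ^ (α - (N : ℝ)) * (C₂ * ρ ^ N)
          = K * (ρ / 2) ^ α + c * C₂ * ((ρ / 2) ^ (α - (N : ℝ)) * ρ ^ N) := by ring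
        _ = K * (ρ ^ α * 2 ^ (-α)) + ρ ^ α * (K * (1 - 2 ^ (-α))) := by rw [e1, e2, e3]; ring
        _ = K * ρ ^ α := by ring
  refine ⟨K + c, by positivity, ?_⟩
  intro x A M hM hA
  set ρ : ℝ := M ^ (1 / (N : ℝ)) with hρ
  have hρ0 : 0 < ρ := by positivity
  obtain ⟨n, hn⟩ := pow_unbounded_of_one_lt ρ (by norm_num : (1 : ℝ) < 2)
  have hpt : ∀ y, A.indicator (κ x) y ≤ {y | (d x y : ℝ) ≤ ρ}.indicator (κ x) y +
      ENNReal.ofReal (c * ρ ^ (α - (N : ℝ))) * A.indicator (fun _ => (1 : ℝ≥0∞)) y := by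
    intro y
    by_cases hy : y ∈ A
    · rw [Set.indicator_of_mem hy, Set.indicator_of_mem hy, mul_one]
      by_cases hy2 : (d x y : ℝ) ≤ ρ
      · rw [Set.indicator_of_mem (by exact hy2)]
        exact le_self_add
      · exact (hκle x y ρ hρ0 (not_le.1 hy2).le).trans le_add_self
    · rw [Set.indicator_of_notMem hy]
      exact zero_le
  refine (ENNReal.tsum_le_tsum hpt).trans ?_
  rw [ENNReal.tsum_add, ENNReal.tsum_mul_left]
  refine (add_le_add (hnear n x ρ hρ0 hn) (mul_le_mul_right hA _)).trans ?_
  rw [← ENNReal.ofReal_mul (by positivity), ← ENNReal.ofReal_add (by positivity) (by positivity)]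
  apply le_of_eq
  congr 1
  have e1 : ρ ^ α = M ^ (α / (N : ℝ)) := by
    rw [hρ, ← Real.rpow_mul hM.le]; congr 1; ring
  have e2 : ρ ^ (α - (N : ℝ)) * M = M ^ (α / (N : ℝ)) := by
    rw [hρ, ← Real.rpow_mul hM.le, ← Real.rpow_add_one hM.ne']
    congr 1; field_simp; ring
  rw [e1, mul_assoc, e2]; ring

lemma wordDist_symm [Group G] (S : Finset G) (hS : ∀ s ∈ S, s⁻¹ ∈ S) (x y : G) :
    wordDist S x y = wordDist S y x := by
  have key : ∀ x y : G, ∀ k, (∃ l : List G, (∀ g ∈ l, g ∈ S) ∧ l.length = k ∧ x⁻¹ * y = l.prod) →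
      (∃ l : List G, (∀ g ∈ l, g ∈ S) ∧ l.length = k ∧ y⁻¹ * x = l.prod) := by
    rintro x y k ⟨l, h1, h2, h3⟩
    refine ⟨(l.map (fun g => g⁻¹)).reverse, ?_, by simpa using h2, ?_⟩
    · intro g hg
      simp only [List.mem_reverse, List.mem_map] at hg
      obtain ⟨g', hg', rfl⟩ := hg
      exact hS _ (h1 _ hg')
    · rw [← List.prod_inv_reverse, ← h3]
      group
  unfold wordDist
  congr 1
  ext k
  exact ⟨key x y k, key y x k⟩

lemma ball_count [Group G] (S : Finset G) (hS : ∀ s ∈ S, s⁻¹ ∈ S) (N : ℕ)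
    (C₁ C₂ : ℝ) (h1 : 0 < C₁)
    (h : ∀ r : ℝ, 1 ≤ r → C₁ * r ^ N ≤ ((ball S (1 : G) r).ncard : ℝ) ∧
      ((ball S (1 : G) r).ncard : ℝ) ≤ C₂ * r ^ N) (x : G) (ρ : ℝ) (hρ : 1 ≤ ρ) :
    (∑' y, {y | (wordDist S x y : ℝ) ≤ ρ}.indicator (fun _ => (1 : ℝ≥0∞)) y)
      ≤ ENNReal.ofReal (C₂ * ρ ^ N) := by
  obtain ⟨ha, hb⟩ := h ρ hρ
  have hpos : 0 < ((ball S (1 : G) ρ).ncard : ℝ) := lt_of_lt_of_le (by positivity) ha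
  have hfin : (ball S (1 : G) ρ).Finite :=
    Set.finite_of_ncard_pos (by exact_mod_cast hpos)
  have e : (∑' y, {y | (wordDist S x y : ℝ) ≤ ρ}.indicator (fun _ => (1 : ℝ≥0∞)) y)
      = ∑' z, (ball S (1 : G) ρ).indicator (fun _ => (1 : ℝ≥0∞)) z := by
    rw [← (Equiv.mulLeft x).tsum_eq]
    refine tsum_congr fun z => ?_
    have : wordDist S x (x * z) = wordDist S z 1 := by
      rw [wordDist_symm S hS]
      unfold wordDist
      simp
    simp only [Set.indicator, Equiv.coe_mulLeft, Set.mem_setOf_eq, ball, this]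
  rw [e, ← tsum_subtype, ENNReal.tsum_set_one, ← hfin.cast_ncard_eq]
  rw [ENat.toENNReal_coe, ← ENNReal.ofReal_natCast]
  exact ENNReal.ofReal_le_ofReal hb

/-- The `ℓ²` part of the energy controls `ℓ^q` for `q ≥ 2`. -/
lemma lq_bound [Group G] (S : Finset G) (lam : ℝ) (hlam : 0 < lam) (a : G → ℝ) (ha : ∀ x, 0 ≤ a x)
    (u : G → ℝ) (hu : MemE S a lam u) (q : ℝ) (hq : 2 < q) :
    (Summable fun x => |u x| ^ q) ∧ lpNorm q u ≤ normE S a lam u := by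
  have hle : ∀ x, (u x) ^ 2 ≤ eDensity S a lam u x := by
    intro x
    have h1 : 0 ≤ grad S u u x := by
      unfold grad
      refine mul_nonneg (by norm_num) (Finset.sum_nonneg fun s _ => mul_self_nonneg _)
    have h2 : 0 ≤ lam * a x * (u x) ^ 2 := mul_nonneg (mul_nonneg hlam.le (ha x)) (sq_nonneg _)
    unfold eDensity
    nlinarith [sq_nonneg (lap S u x)]
  have hden : ∀ x, 0 ≤ eDensity S a lam u x := fun x => (sq_nonneg _).trans (hle x)
  have hE0 : 0 ≤ normEsq S a lam u := tsum_nonneg hden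
  have hsq : Summable fun x => (u x) ^ 2 :=
    Summable.of_nonneg_of_le (fun x => sq_nonneg _) hle hu
  have hQ : ∑' x, (u x) ^ 2 ≤ normEsq S a lam u := hsq.tsum_le_tsum hle hu
  have hux : ∀ x, |u x| ≤ normE S a lam u := by
    intro x
    unfold normE
    apply Real.le_sqrt_of_sq_le
    rw [sq_abs]
    exact (hle x).trans (hu.le_tsum x fun y _ => hden y)
  set n := normE S a lam u with hn
  have hn0 : 0 ≤ n := Real.sqrt_nonneg _
  have hn2 : n ^ 2 = normEsq S a lam u := Real.sq_sqrt hE0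
  have hpt : ∀ x, |u x| ^ q ≤ n ^ (q - 2) * (u x) ^ 2 := by
    intro x
    have : |u x| ^ q = |u x| ^ (q - 2) * (u x) ^ 2 := by
      rw [← sq_abs, ← Real.rpow_natCast, ← Real.rpow_add_of_nonneg (abs_nonneg _) (by linarith) (by norm_num)]
      congr 1; push_cast; ring
    rw [this]
    gcongr
    · exact hux x
  have hs : Summable fun x => |u x| ^ q :=
    Summable.of_nonneg_of_le (fun x => by positivity) hpt (hsq.mul_left _)
  refine ⟨hs, ?_⟩
  have hsum : ∑' x, |u x| ^ q ≤ n ^ q := by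
    calc ∑' x, |u x| ^ q ≤ ∑' x, n ^ (q - 2) * (u x) ^ 2 := hs.tsum_le_tsum hpt (hsq.mul_left _)
      _ = n ^ (q - 2) * ∑' x, (u x) ^ 2 := tsum_mul_left
      _ ≤ n ^ (q - 2) * n ^ 2 := by rw [hn2]; gcongr
      _ = n ^ q := by
        rw [← Real.rpow_natCast n 2, ← Real.rpow_add_of_nonneg hn0 (by linarith) (by norm_num)]
        congr 1; push_cast; ring
  unfold lpNorm
  calc _ ≤ (n ^ q) ^ (1 / q) := by
        apply Real.rpow_le_rpow (tsum_nonneg fun x => by positivity) hsum (by positivity)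
    _ = n := by rw [← Real.rpow_mul hn0, mul_one_div_cancel (by linarith), Real.rpow_one]

theorem hls_energy_bounds
    {G : Type*} [Group G] [Countable G] [DecidableEq G]
    (S : Finset G) (hSsymm : ∀ s ∈ S, s⁻¹ ∈ S)
    (hSgen : Subgroup.closure (S : Set G) = ⊤)
    (N : ℕ) (hN : 2 ≤ N) (hgrowth : PolyGrowth S N)
    (α : ℝ) (hα0 : 0 < α) (hαN : α < (N : ℝ))
    (R : G → G → ℝ) (hR : RieszKernel S N α R)
    (p : ℝ) (hp : ((N : ℝ) + α) / (N : ℝ) < p) :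
    ∃ C : ℝ, 0 < C ∧ ∀ lam : ℝ, 0 < lam → ∀ a : G → ℝ, (∀ x, 0 ≤ a x) →
      ∀ u : G → ℝ, MemE S a lam u →
      (∑' x : G, convE R (fun y => |u y| ^ p) x * ENNReal.ofReal (|u x| ^ p))
          ≤ ENNReal.ofReal (C * lpNorm (2 * (N : ℝ) * p / ((N : ℝ) + α)) u ^ (2 * p)) ∧
      C * lpNorm (2 * (N : ℝ) * p / ((N : ℝ) + α)) u ^ (2 * p)
          ≤ C * normE S a lam u ^ (2 * p) ∧
      (∑' x : G, convE R (fun y => |u y| ^ p) x ^ (2 * (N : ℝ) / ((N : ℝ) - α)))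
          ^ (((N : ℝ) - α) / (2 * (N : ℝ)))
        ≤ ENNReal.ofReal (C * lpNorm (2 * (N : ℝ) * p / ((N : ℝ) + α)) u ^ p) := by
  obtain ⟨C₁, C₂, hC₁, hC₂, hg⟩ := hgrowth
  obtain ⟨hRpos, c₁, c₂, hc₁, hc₂, hRb⟩ := hR
  have hN0 : (0 : ℝ) < N := by linarith
  set κ : G → G → ℝ≥0∞ := fun x y => if wordDist S x y = 0 then 0 else
    ENNReal.ofReal (c₂ * (wordDist S x y : ℝ) ^ (α - (N : ℝ))) with hκ
  have hsym : ∀ x y, κ x y = κ y x := by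
    intro x y
    simp only [hκ, wordDist_symm S hSsymm x y]
  obtain ⟨C, hC, HC⟩ := riesz_set_bound (wordDist S) N hN α hα0 hαN c₂ C₂ hc₂ hC₂ κ
    (fun x y => rfl) (ball_count S hSsymm N C₁ C₂ hC₁ hg)
  set γ : ℝ := α / N with hγ
  have hγ0 : 0 < γ := by positivity
  have hγ1 : γ < 1 := by rw [hγ, div_lt_one hN0]; exact hαN
  obtain ⟨r, hr⟩ : ∃ r : ℝ, r = 2 / (1 + γ) := ⟨_, rfl⟩
  obtain ⟨s, hs⟩ : ∃ s : ℝ, s = 2 / (1 - γ) := ⟨_, rfl⟩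
  have hr1 : 1 < r := by rw [hr, lt_div_iff₀ (by linarith)]; linarith
  have hs1 : 1 < s := by rw [hs, lt_div_iff₀ (by linarith)]; linarith
  have hr0 : 0 < r := by linarith
  have hrs : 1 / r + 1 / s = 1 := by rw [hr, hs, one_div_div, one_div_div]; ring
  have hNα : (0 : ℝ) < N - α := by linarith
  have hs' : 2 * (N : ℝ) / ((N : ℝ) - α) = s := by
    rw [hs, hγ]; field_simp
  have hs'' : ((N : ℝ) - α) / (2 * (N : ℝ)) = 1 / s := by
    rw [← hs', one_div_div]
  have hp1 : 1 + γ < p := by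
    rw [hγ]; refine lt_of_eq_of_lt ?_ hp; field_simp
  have hp0 : 0 < p := by linarith
  obtain ⟨q, hq⟩ : ∃ q : ℝ, q = p * r := ⟨_, rfl⟩
  have hq' : 2 * (N : ℝ) * p / ((N : ℝ) + α) = q := by
    rw [hq, hr, hγ]; field_simp
  have hq2 : 2 < q := by
    rw [hq, hr, mul_div_assoc', lt_div_iff₀ (by linarith)]; linarith
  obtain ⟨D, hD, HD⟩ := hls_bil1 κ hsym C γ r hC hγ0 hγ1 hr HC
  have HB := hls_bil κ D r hr0 HD
  refine ⟨D, hD, ?_⟩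
  intro lam hlam a ha u hu
  obtain ⟨hsum, hnorm⟩ := lq_bound S lam hlam a ha u hu q hq2
  rw [hq', hs', hs'']
  set L := lpNorm q u with hL
  have hL0 : 0 ≤ L := Real.rpow_nonneg (tsum_nonneg fun x => by positivity) _
  set f : G → ℝ≥0∞ := fun y => ENNReal.ofReal (|u y| ^ p) with hf
  have hconv : ∀ x, convE R (fun y => |u y| ^ p) x ≤ ∑' y, κ x y * f y := by
    intro x
    unfold convE
    refine ENNReal.tsum_le_tsum fun y => ?_
    split_ifs with h
    · exact zero_le
    · have hxy : x ≠ y := fun h' => h h'.symm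
      have hb := (hRb x y hxy).2
      have hd : wordDist S x y ≠ 0 := by
        intro h0
        rw [h0, Nat.cast_zero, Real.zero_rpow (by linarith), mul_zero] at hb
        exact absurd (hRpos x y) (not_lt.2 hb)
      simp only [hκ, hf, if_neg hd]
      rw [ENNReal.ofReal_mul (hRpos x y).le]
      gcongr
  have hfr : (∑' y, f y ^ r) = ENNReal.ofReal (∑' y, |u y| ^ q) := by
    rw [ENNReal.ofReal_tsum_of_nonneg (fun x => by positivity) hsum]
    refine tsum_congr fun y => ?_
    simp only [hf]
    rw [ENNReal.ofReal_rpow_of_nonneg (by positivity) hr0.le, ← Real.rpow_mul (abs_nonneg _), ← hq]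
  have hfL : (∑' y, f y ^ r) ^ (1 / r) = ENNReal.ofReal (L ^ p) := by
    have h0 : 0 ≤ ∑' y, |u y| ^ q := tsum_nonneg fun x => by positivity
    rw [hfr, ENNReal.ofReal_rpow_of_nonneg h0 (by positivity), hL, lpNorm, ← Real.rpow_mul h0]
    congr 2
    rw [hq]; field_simp
  have hft : (∑' y, f y ^ r) ≠ ⊤ := by rw [hfr]; exact ENNReal.ofReal_ne_top
  refine ⟨?_, ?_, ?_⟩
  · calc _ ≤ ∑' x, ∑' y, κ x y * f y * f x := by
          refine ENNReal.tsum_le_tsum fun x => ?_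
          rw [ENNReal.tsum_mul_right]
          exact mul_le_mul_left (hconv x) _
      _ ≤ _ := HB f f hft hft
      _ = _ := by
          rw [hfL, ← ENNReal.ofReal_mul hD.le, ← ENNReal.ofReal_mul (by positivity), mul_assoc,
            ← Real.rpow_add_of_nonneg hL0 hp0.le hp0.le, two_mul]
  · gcongr
  · rw [ENNReal.ofReal_mul hD.le, ← hfL]
    refine hls_dual _ _ ?_ r s hr1 hs1 hrs ?_
    · rw [hfL]; exact ENNReal.mul_ne_top ENNReal.ofReal_ne_top ENNReal.ofReal_ne_top
    · intro g hgt
      calc _ ≤ ∑' x, ∑' y, κ x y * f y * g x := by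
            refine ENNReal.tsum_le_tsum fun x => ?_
            rw [ENNReal.tsum_mul_right]
            exact mul_le_mul_left (hconv x) _
        _ ≤ _ := HB g f hgt hft

end Choquard
end
end

section
/- Assume N ≥ 2, 0 < α < N and p > (N+α)/N. There exists σ > 0, depending only on N, α, p and the growth and kernel constants (in particular independent of λ and of u), such that every u ∈ N_λ satisfies ‖u‖_{E_λ} ≥ σ. -/
open scoped BigOperators ENNReal
open Filter

noncomputable section

namespace Choquard

variable {G : Type*}

lemma ofReal_tsum_le {ι : Type*} (f : ι → ℝ) (hf : ∀ i, 0 ≤ f i) :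
    ENNReal.ofReal (∑' i, f i) ≤ ∑' i, ENNReal.ofReal (f i) := by
  by_cases h : Summable f
  · rw [ENNReal.ofReal_tsum_of_nonneg hf h]
  · rw [tsum_eq_zero_of_not_summable h]; simp

lemma pointwise_bound (k P q δ : ℝ) (hk : 0 < k) (hP : 0 ≤ P) (hq1 : 1 < q) (hq2 : q < 2)
    (hδ : 0 < δ) :
    k ^ (2 - q) * P ^ q ≤ δ ^ (q - 2) * P ^ 2 + δ ^ (q - 1) * (k * P) := by
  rcases hP.eq_or_lt with h0 | h0
  · subst h0
    rw [Real.zero_rpow (by linarith)]; simp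
  by_cases h : δ * k ≤ P
  · have h1 : k ^ (2 - q) ≤ (P / δ) ^ (2 - q) := by
      apply Real.rpow_le_rpow hk.le _ (by linarith)
      rw [le_div_iff₀ hδ]; linarith
    have h2 : (P / δ) ^ (2 - q) * P ^ q = δ ^ (q - 2) * P ^ 2 := by
      rw [Real.div_rpow hP hδ.le, show q - 2 = -(2 - q) by ring, Real.rpow_neg hδ.le,
        ← Real.rpow_natCast P 2, show ((2 : ℕ) : ℝ) = (2 - q) + q by push_cast; ring,
        Real.rpow_add h0]
      field_simp
    have h3 : 0 ≤ δ ^ (q - 1) * (k * P) := by positivity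
    have h4 : k ^ (2 - q) * P ^ q ≤ (P / δ) ^ (2 - q) * P ^ q :=
      mul_le_mul_of_nonneg_right h1 (by positivity)
    linarith
  · push Not at h
    have h1 : P ^ (q - 1) ≤ (δ * k) ^ (q - 1) :=
      Real.rpow_le_rpow hP h.le (by linarith)
    have h2 : k ^ (2 - q) * ((δ * k) ^ (q - 1) * P) = δ ^ (q - 1) * (k * P) := by
      rw [Real.mul_rpow hδ.le hk.le]
      have : k ^ (2 - q) * k ^ (q - 1) = k := by
        rw [← Real.rpow_add hk]; norm_num
      linear_combination (δ ^ (q - 1) * P) * this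
    have h3 : P ^ q = P ^ (q - 1) * P := by
      rw [Real.rpow_sub_one h0.ne']; field_simp
    have h4 : k ^ (2 - q) * P ^ q ≤ k ^ (2 - q) * ((δ * k) ^ (q - 1) * P) := by
      rw [h3]; gcongr
    have h5 : 0 ≤ δ ^ (q - 2) * P ^ 2 := by positivity
    linarith

/-- the word-length kernel -/
def kap [Group G] [DecidableEq G] (S : Finset G) (θ : ℝ) (g : G) : ℝ≥0∞ :=
  if g = 1 then 0 else ENNReal.ofReal ((wordDist S 1 g : ℝ) ^ (-θ))

lemma wordDist_left [Group G] (S : Finset G) (x y : G) :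
    wordDist S x y = wordDist S 1 (x⁻¹ * y) := by
  simp [wordDist]

lemma kap_tsum [Group G] [DecidableEq G] (S : Finset G) (N : ℕ) (hgrowth : PolyGrowth S N)
    (θ : ℝ) (hθ : (N : ℝ) < θ)
    (hpos : ∀ x y : G, x ≠ y → 1 ≤ wordDist S x y) :
    ∑' g : G, kap S θ g ≠ ⊤ := by
  obtain ⟨C₁, C₂, hC₁, hC₂, hB⟩ := hgrowth
  have hθ0 : 0 < θ := lt_of_le_of_lt (Nat.cast_nonneg N) hθ
  set r : ℕ → ℝ := fun j => (2 : ℝ) ^ (j + 1) with hr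
  have hr1 : ∀ j, 1 ≤ r j := fun j => one_le_pow₀ (by norm_num)
  have hfin : ∀ j, (ball S (1 : G) (r j)).Finite := by
    intro j
    apply Set.finite_of_ncard_ne_zero
    intro h0
    have := (hB (r j) (hr1 j)).1
    rw [h0] at this
    have h2 : 0 < C₁ * r j ^ N := mul_pos hC₁ (pow_pos (by linarith [hr1 j]) _)
    simp at this
    linarith
  have hle : ∀ g : G, kap S θ g⁻¹ ≤
      ∑' j : ℕ, (ball S (1 : G) (r j)).indicator
        (fun _ => ENNReal.ofReal (((2 : ℝ) ^ (-θ)) ^ j)) g := by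
    intro g
    by_cases hg : g = 1
    · simp [kap, hg]
    · have hn := hpos g 1 hg
      have hd : wordDist S 1 g⁻¹ = wordDist S g 1 := by rw [wordDist_left S g 1]; simp
      set n := wordDist S g 1 with hnn
      have hmem : g ∈ ball S (1 : G) (r (Nat.log 2 n)) := by
        have : n < 2 ^ (Nat.log 2 n + 1) := Nat.lt_pow_succ_log_self (by norm_num) n
        show (n : ℝ) ≤ 2 ^ (Nat.log 2 n + 1)
        exact_mod_cast this.le
      refine le_trans ?_ (ENNReal.le_tsum (Nat.log 2 n))
      rw [Set.indicator_of_mem hmem, kap, if_neg (by simpa using hg), hd]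
      apply ENNReal.ofReal_le_ofReal
      rw [← Real.rpow_natCast, ← Real.rpow_mul (by norm_num), mul_comm (-θ),
        Real.rpow_mul (by norm_num), Real.rpow_natCast]
      apply Real.rpow_le_rpow_of_nonpos (by positivity) _ (by linarith)
      exact_mod_cast Nat.pow_log_le_self 2 (by omega)
  have h1 : ∑' g : G, kap S θ g = ∑' g : G, kap S θ g⁻¹ :=
    ((Equiv.inv G).tsum_eq (kap S θ)).symm
  rw [h1]
  refine ne_top_of_le_ne_top ?_ (ENNReal.tsum_le_tsum hle)
  rw [ENNReal.tsum_comm]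
  have h2 : ∀ j : ℕ, ∑' g : G, (ball S (1 : G) (r j)).indicator
        (fun _ => ENNReal.ofReal (((2 : ℝ) ^ (-θ)) ^ j)) g ≤
        ENNReal.ofReal (C₂ * 2 ^ N * ((2 : ℝ) ^ ((N : ℝ) - θ)) ^ j) := by
    intro j
    rw [← tsum_subtype, ENNReal.tsum_set_const, ← (hfin j).cast_ncard_eq]
    have h3 := (hB (r j) (hr1 j)).2
    have : (((ball S (1 : G) (r j)).ncard : ℕ∞) : ℝ≥0∞)
        = ENNReal.ofReal ((ball S (1 : G) (r j)).ncard : ℝ) := by simp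
    rw [this, ← ENNReal.ofReal_mul (by positivity)]
    apply ENNReal.ofReal_le_ofReal
    calc ((ball S (1 : G) (r j)).ncard : ℝ) * ((2 : ℝ) ^ (-θ)) ^ j
        ≤ (C₂ * r j ^ N) * ((2 : ℝ) ^ (-θ)) ^ j := by gcongr
      _ = _ := by
        rw [show (N : ℝ) - θ = N + -θ by ring, Real.rpow_add (by norm_num), Real.rpow_natCast,
          mul_pow, hr]
        simp only
        rw [← pow_mul, ← pow_mul]
        ring
  refine ne_top_of_le_ne_top ?_ (ENNReal.tsum_le_tsum h2)
  apply Summable.tsum_ofReal_ne_top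
  apply Summable.mul_left
  apply summable_geometric_of_lt_one (by positivity)
  apply Real.rpow_lt_one_of_one_lt_of_neg (by norm_num) (by linarith)

lemma young_sum [Group G] [DecidableEq G] (k : G → ℝ≥0∞) (U : G → ℝ≥0∞) (D h : ℝ≥0∞) :
    ∑' x, ∑' y, (D * (U x * U y) + h * (k (x⁻¹ * y) * U x) + h * (k (x⁻¹ * y) * U y)) =
      D * ((∑' x, U x) * (∑' x, U x)) + 2 * h * ((∑' g, k g) * ∑' x, U x) := by
  have e1 : ∀ x : G, ∑' y, k (x⁻¹ * y) = ∑' g, k g := fun x =>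
    (Equiv.mulLeft x⁻¹).tsum_eq k
  have e2 : ∀ y : G, ∑' x, k (x⁻¹ * y) = ∑' g, k g := fun y =>
    ((Equiv.inv G).trans (Equiv.mulRight y)).tsum_eq k
  simp_rw [ENNReal.tsum_add]
  have a1 : ∑' x, ∑' y, D * (U x * U y) = D * ((∑' x, U x) * (∑' x, U x)) := by
    simp_rw [ENNReal.tsum_mul_left, ENNReal.tsum_mul_right]
  have a2 : ∑' x, ∑' y, h * (k (x⁻¹ * y) * U x) = h * ((∑' g, k g) * ∑' x, U x) := by
    simp_rw [ENNReal.tsum_mul_left, ENNReal.tsum_mul_right, e1, ENNReal.tsum_mul_left]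
  have a3 : ∑' x, ∑' y, h * (k (x⁻¹ * y) * U y) = h * ((∑' g, k g) * ∑' x, U x) := by
    rw [ENNReal.tsum_comm]
    simp_rw [ENNReal.tsum_mul_left, ENNReal.tsum_mul_right, e2, ENNReal.tsum_mul_left]
  rw [a1, a2, a3]
  ring

set_option maxHeartbeats 2000000

theorem nehari_norm_lower_bound
    {G : Type*} [Group G] [Countable G] [DecidableEq G]
    (S : Finset G) (hSsymm : ∀ s ∈ S, s⁻¹ ∈ S)
    (hSgen : Subgroup.closure (S : Set G) = ⊤)
    (N : ℕ) (hN : 2 ≤ N) (hgrowth : PolyGrowth S N)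
    (α : ℝ) (hα0 : 0 < α) (hαN : α < (N : ℝ))
    (R : G → G → ℝ) (hR : RieszKernel S N α R)
    (p : ℝ) (hp : ((N : ℝ) + α) / (N : ℝ) < p) :
    ∃ σ : ℝ, 0 < σ ∧ ∀ lam : ℝ, 0 < lam → ∀ a : G → ℝ, (∀ x, 0 ≤ a x) →
      ∀ u ∈ nehari S a lam R p, σ ≤ normE S a lam u := by
  obtain ⟨hRpos, c₁, c₂, hc₁, hc₂, hRb⟩ := hR
  have hN0 : (0 : ℝ) < N := by exact_mod_cast (by omega : 0 < N)
  have hpos : ∀ x y : G, x ≠ y → 1 ≤ wordDist S x y := by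
    intro x y hxy
    by_contra hlt
    have h0 : wordDist S x y = 0 := by omega
    have h1 := (hRb x y hxy).2
    rw [h0, Nat.cast_zero, Real.zero_rpow (by linarith)] at h1
    linarith [hRpos x y]
  -- the reduced exponent
  set q₀ : ℝ := ((N : ℝ) + α) / N with hq₀
  have hq₀1 : 1 < q₀ := by rw [hq₀, lt_div_iff₀ hN0]; linarith
  have hq₀2 : q₀ < 2 := by rw [hq₀, div_lt_iff₀ hN0]; linarith
  obtain ⟨q, hq0, hqp, hq2⟩ : ∃ q, q₀ < q ∧ q ≤ p ∧ q < 2 :=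
    ⟨min p ((q₀ + 2) / 2), lt_min hp (by linarith), min_le_left _ _,
      lt_of_le_of_lt (min_le_right _ _) (by linarith)⟩
  have hq1 : 1 < q := by linarith
  set θ : ℝ := ((N : ℝ) - α) / (2 - q) with hθd
  have hθ : (N : ℝ) < θ := by
    rw [hθd, lt_div_iff₀ (by linarith)]
    have : q₀ * N = N + α := by rw [hq₀]; field_simp
    nlinarith
  have hM := kap_tsum S N hgrowth θ hθ hpos
  set M : ℝ := (∑' g : G, kap S θ g).toReal with hMd
  have hM0 : 0 ≤ M := ENNReal.toReal_nonneg
  have hMe : ∑' g : G, kap S θ g = ENNReal.ofReal M := (ENNReal.ofReal_toReal hM).symm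
  set b : ℝ := 1 / (2 * c₂ * (M + 1)) with hb
  have hb0 : 0 < b := by positivity
  set δ : ℝ := b ^ (1 / (q - 1)) with hδd
  have hδ : 0 < δ := Real.rpow_pos_of_pos hb0 _
  have hδb : δ ^ (q - 1) = b := by
    rw [hδd, ← Real.rpow_mul hb0.le, one_div_mul_cancel (by linarith), Real.rpow_one]
  set D : ℝ := c₂ * δ ^ (q - 2) with hD
  have hD0 : 0 < D := mul_pos hc₂ (Real.rpow_pos_of_pos hδ _)
  have hbM : c₂ * b * M ≤ 1 / 2 := by
    rw [hb]
    have : c₂ * (1 / (2 * c₂ * (M + 1))) * M = (1 / 2) * (M / (M + 1)) := by field_simp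
    rw [this]
    have : M / (M + 1) ≤ 1 := by rw [div_le_one (by linarith)]; linarith
    linarith
  refine ⟨min 1 (1 / (2 * D)), lt_min one_pos (by positivity), ?_⟩
  intro lam hlam a ha u hu
  obtain ⟨hmem, hne, hJ⟩ := hu
  by_contra hlt
  push Not at hlt
  have hgrad : ∀ x, 0 ≤ grad S u u x := fun x => by
    unfold grad
    exact mul_nonneg (by norm_num) (Finset.sum_nonneg fun s _ => mul_self_nonneg _)
  have hdens : ∀ x, (u x) ^ 2 ≤ eDensity S a lam u x := fun x => by
    unfold eDensity
    nlinarith [hgrad x, sq_nonneg (lap S u x), mul_nonneg (mul_nonneg hlam.le (ha x)) (sq_nonneg (u x))]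
  have hdens0 : ∀ x, 0 ≤ eDensity S a lam u x := fun x => (sq_nonneg _).trans (hdens x)
  have hsum : Summable fun x => (u x) ^ 2 :=
    Summable.of_nonneg_of_le (fun x => sq_nonneg _) hdens hmem
  set E : ℝ := normEsq S a lam u with hE
  set A : ℝ := ∑' x, (u x) ^ 2 with hA
  have hA0 : 0 ≤ A := tsum_nonneg fun x => sq_nonneg _
  have hAE : A ≤ E := hsum.tsum_le_tsum hdens hmem
  have hE0 : 0 < E := by
    obtain ⟨x, hx⟩ := Function.ne_iff.mp hne
    have h1 : (u x) ^ 2 ≤ E := (hdens x).trans (hmem.le_tsum x fun y _ => hdens0 y)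
    have : 0 < (u x) ^ 2 := by
      have : u x ≠ 0 := hx
      positivity
    linarith
  have hsq : normE S a lam u = Real.sqrt E := rfl
  have hs1 : Real.sqrt E < 1 := by rw [← hsq]; exact hlt.trans_le (min_le_left _ _)
  have hs2 : Real.sqrt E < 1 / (2 * D) := by rw [← hsq]; exact hlt.trans_le (min_le_right _ _)
  have hss : Real.sqrt E * Real.sqrt E = E := Real.mul_self_sqrt hE0.le
  have hs0 : 0 ≤ Real.sqrt E := Real.sqrt_nonneg _
  have hE1 : E < 1 := by nlinarith
  have hE2 : E < 1 / (2 * D) := by nlinarith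
  have hu1 : ∀ x, |u x| ≤ 1 := fun x => by
    have h1 : (u x) ^ 2 ≤ A := hsum.le_tsum x fun y _ => sq_nonneg _
    rw [← sq_le_one_iff_abs_le_one]; linarith
  have hinner : innerE S a lam u u = E := by
    rw [hE, innerE, normEsq]
    refine tsum_congr fun x => ?_
    rw [eDensity]; ring
  have hK : E = Kterm R p u u := by
    have h := hJ
    rw [Jd, hinner] at h; linarith
  have hup : ∀ x, |u x| ^ (p - 2) * u x * u x = |u x| ^ p := fun x => by
    by_cases h0 : u x = 0
    · rw [h0]; simp; rw [Real.zero_rpow (by linarith)]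
    · have : 0 < |u x| := abs_pos.mpr h0
      rw [mul_assoc, ← abs_mul_abs_self (u x), ← sq, ← Real.rpow_natCast |u x| 2,
        ← Real.rpow_add this]
      norm_num
  have hterm : ∀ x y, (if y = x then 0 else R x y * |u y| ^ p) * |u x| ^ p ≥ 0 := fun x y => by
    split_ifs
    · simp
    · exact mul_nonneg (mul_nonneg (hRpos x y).le (by positivity)) (by positivity)
  have hmain : ENNReal.ofReal (Kterm R p u u) ≤
      ∑' x, ∑' y, ENNReal.ofReal ((if y = x then 0 else R x y * |u y| ^ p) * |u x| ^ p) := by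
    rw [Kterm]
    have : ∀ x, conv R (fun y => |u y| ^ p) x * (|u x| ^ (p - 2) * u x * u x) =
        ∑' y, (if y = x then 0 else R x y * |u y| ^ p) * |u x| ^ p := fun x => by
      rw [hup, conv, tsum_mul_right]
    simp_rw [this]
    refine (ofReal_tsum_le _ fun x => tsum_nonneg fun y => hterm x y).trans ?_
    exact ENNReal.tsum_le_tsum fun x => ofReal_tsum_le _ fun y => hterm x y
  have hpt : ∀ x y, ENNReal.ofReal ((if y = x then 0 else R x y * |u y| ^ p) * |u x| ^ p) ≤
      ENNReal.ofReal D * (ENNReal.ofReal (u x ^ 2) * ENNReal.ofReal (u y ^ 2))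
      + ENNReal.ofReal (c₂ * b / 2) * (kap S θ (x⁻¹ * y) * ENNReal.ofReal (u x ^ 2))
      + ENNReal.ofReal (c₂ * b / 2) * (kap S θ (x⁻¹ * y) * ENNReal.ofReal (u y ^ 2)) := by
    intro x y
    by_cases hxy : y = x
    · simp [hxy]
    rw [if_neg hxy, kap, if_neg (by
      intro h; exact hxy (inv_mul_eq_one.mp h).symm), ← wordDist_left]
    have hd1 := hpos x y (Ne.symm hxy)
    have hRle := (hRb x y (Ne.symm hxy)).2
    set d : ℝ := (wordDist S x y : ℝ) with hd
    have hd0 : 0 < d := by rw [hd]; exact_mod_cast hd1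
    set k : ℝ := d ^ (-θ) with hk
    have hk0 : 0 < k := Real.rpow_pos_of_pos hd0 _
    have hkq : k ^ (2 - q) = d ^ (α - (N : ℝ)) := by
      rw [hk, ← Real.rpow_mul hd0.le, hθd]
      congr 1
      have : 2 - q ≠ 0 := by linarith
      field_simp
      ring
    rw [← ENNReal.ofReal_mul (by positivity), ← ENNReal.ofReal_mul (by positivity),
      ← ENNReal.ofReal_mul (by positivity), ← ENNReal.ofReal_mul (by positivity),
      ← ENNReal.ofReal_mul (by positivity), ← ENNReal.ofReal_mul (by positivity),
      ← ENNReal.ofReal_add (by positivity) (by positivity),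
      ← ENNReal.ofReal_add (by positivity) (by positivity)]
    apply ENNReal.ofReal_le_ofReal
    set P : ℝ := |u x| * |u y| with hP
    have hP0 : 0 ≤ P := by positivity
    have hP1 : P ≤ 1 := mul_le_one₀ (hu1 x) (abs_nonneg _) (hu1 y)
    have hPp : |u y| ^ p * |u x| ^ p = P ^ p := by
      rw [hP, Real.mul_rpow (abs_nonneg _) (abs_nonneg _)]; ring
    have hPq : P ^ p ≤ P ^ q := Real.rpow_le_rpow_of_exponent_ge' hP0 hP1 (by linarith) hqp
    have hPsq : P ^ 2 = u x ^ 2 * u y ^ 2 := by rw [hP, mul_pow, sq_abs, sq_abs]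
    have hPam : P ≤ (u x ^ 2 + u y ^ 2) / 2 := by
      have := sq_nonneg (|u x| - |u y|)
      rw [← sq_abs (u x), ← sq_abs (u y), hP]; linarith
    have hpb := pointwise_bound k P q δ hk0 hP0 hq1 hq2 hδ
    rw [hkq, hδb, hPsq] at hpb
    calc R x y * |u y| ^ p * |u x| ^ p = R x y * P ^ p := by rw [mul_assoc, hPp]
      _ ≤ (c₂ * d ^ (α - (N : ℝ))) * P ^ q := by gcongr
      _ = c₂ * (d ^ (α - (N : ℝ)) * P ^ q) := by ring
      _ ≤ c₂ * (δ ^ (q - 2) * (u x ^ 2 * u y ^ 2) + b * (k * P)) := by gcongr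
      _ ≤ c₂ * (δ ^ (q - 2) * (u x ^ 2 * u y ^ 2) + b * (k * ((u x ^ 2 + u y ^ 2) / 2))) := by
        gcongr
      _ = _ := by rw [hD]; ring
  have hAe : ∑' x, ENNReal.ofReal (u x ^ 2) = ENNReal.ofReal A :=
    (ENNReal.ofReal_tsum_of_nonneg (fun x => sq_nonneg _) hsum).symm
  have hfinal : ENNReal.ofReal (Kterm R p u u) ≤
      ENNReal.ofReal (D * (A * A) + 2 * (c₂ * b / 2) * (M * A)) := by
    refine hmain.trans ((ENNReal.tsum_le_tsum fun x => ENNReal.tsum_le_tsum fun y => hpt x y).trans ?_)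
    rw [young_sum, hAe, hMe, ENNReal.ofReal_add (by positivity) (by positivity),
      ENNReal.ofReal_mul hD0.le, ENNReal.ofReal_mul hA0, ENNReal.ofReal_mul (by positivity),
      ENNReal.ofReal_mul (by positivity), ENNReal.ofReal_mul hM0]
    simp
  rw [← hK, ENNReal.ofReal_le_ofReal_iff (by positivity)] at hfinal
  have h1 : c₂ * b * M * A ≤ 1 / 2 * E :=
    mul_le_mul hbM hAE hA0 (by norm_num)
  have h2 : D * (A * A) ≤ D * (E * E) := by gcongr
  have h3 : D * E < 1 / 2 := by
    rw [lt_div_iff₀ (by positivity)] at hE2; linarith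
  nlinarith

end Choquard
end
end

section
/- (Mountain-pass geometry.) Assume N ≥ 2, 0 < α < N and p > (N+α)/N. Then: (i) there exist θ > 0 and ρ > 0 such that J_λ(u) ≥ θ for every u ∈ E_λ with ‖u‖_{E_λ} = ρ; and (ii) for this ρ there exists w ∈ E_λ with ‖w‖_{E_λ} > ρ and J_λ(w) < 0. -/
open scoped BigOperators ENNReal
open Filter

noncomputable section

namespace Choquard

variable {G : Type*}

/-- Pointwise interpolation bound behind the (subcritical) Hardy-Littlewood-Sobolev estimate. -/
lemma pointwise_bound_s13 (N : ℕ) (α p : ℝ) (hN : 2 ≤ N) (hαN : α < (N : ℝ)) (hα0 : 0 < α)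
    (hp : ((N : ℝ) + α) / (N : ℝ) < p) :
    ∃ β : ℝ, (N : ℝ) < β ∧ ∀ (d : ℕ) (T u v : ℝ), 0 < T → 0 ≤ u → 0 ≤ v → u ^ 2 ≤ T → v ^ 2 ≤ T →
      (d : ℝ) ^ (α - (N : ℝ)) * (u ^ p * v ^ p) ≤
        T ^ (p - 2) * (u ^ 2 * v ^ 2) + T ^ (p - 1) * ((d : ℝ) ^ (-β) * (u ^ 2 + v ^ 2)) := by
  have hN0 : (0 : ℝ) < N := by positivity
  have hp' : (N : ℝ) + α < p * N := by rwa [div_lt_iff₀ hN0] at hp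
  have hp1 : 1 < p := by
    by_contra h
    push Not at h
    nlinarith
  rcases lt_or_ge p 2 with h2 | h2
  · refine ⟨((N : ℝ) - α) / (2 - p), ?_, ?_⟩
    · rw [lt_div_iff₀ (by linarith)]; nlinarith
    intro d T u v hT hu hv _ _
    have hd : (0 : ℝ) ≤ d := Nat.cast_nonneg d
    set K : ℝ := (d : ℝ) ^ (-(((N : ℝ) - α) / (2 - p))) with hK
    have hK0 : 0 ≤ K := by positivity
    have hKK : K ^ (2 - p) = (d : ℝ) ^ (α - (N : ℝ)) := by
      rw [hK, ← Real.rpow_mul hd]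
      congr 1
      have : (2 - p) ≠ 0 := by linarith
      field_simp
      ring
    have amgm := Real.geom_mean_le_arith_mean2_weighted (w₁ := p - 1) (w₂ := 2 - p)
      (p₁ := T ^ (p - 2) * (u ^ 2 * v ^ 2)) (p₂ := T ^ (p - 1) * (K * (u * v)))
      (by linarith) (by linarith) (by positivity) (by positivity) (by ring)
    have key : (T ^ (p - 2) * (u ^ 2 * v ^ 2)) ^ (p - 1) * (T ^ (p - 1) * (K * (u * v))) ^ (2 - p)
        = (d : ℝ) ^ (α - (N : ℝ)) * (u ^ p * v ^ p) := by
      have huv : 0 ≤ u * v := by positivity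
      have e1 : (T ^ (p - 2) * (u ^ 2 * v ^ 2)) ^ (p - 1)
          = T ^ ((p - 2) * (p - 1)) * (u * v) ^ (2 * (p - 1)) := by
        rw [Real.mul_rpow (by positivity) (by positivity), ← Real.rpow_mul hT.le, ← mul_pow,
          Real.rpow_mul huv]
        norm_num
      have e2 : (T ^ (p - 1) * (K * (u * v))) ^ (2 - p)
          = T ^ ((p - 1) * (2 - p)) * ((d : ℝ) ^ (α - (N : ℝ)) * (u * v) ^ (2 - p)) := by
        rw [Real.mul_rpow (by positivity) (by positivity), ← Real.rpow_mul hT.le,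
          Real.mul_rpow hK0 huv, hKK]
      rw [e1, e2, ← Real.mul_rpow hu hv]
      have e3 : T ^ ((p - 2) * (p - 1)) * T ^ ((p - 1) * (2 - p)) = 1 := by
        rw [← Real.rpow_add hT]
        ring_nf
        simp
      have e4 : (u * v) ^ (2 * (p - 1)) * (u * v) ^ (2 - p) = (u * v) ^ p := by
        rw [← Real.rpow_add_of_nonneg huv (by linarith) (by linarith)]
        ring_nf
      rw [← e4]
      linear_combination ((u * v) ^ (2 * (p - 1)) * (d : ℝ) ^ (α - (N : ℝ)) * (u * v) ^ (2 - p)) * e3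
    rw [key] at amgm
    have hX : 0 ≤ T ^ (p - 2) * (u ^ 2 * v ^ 2) := by positivity
    have hY : 0 ≤ T ^ (p - 1) * (K * (u * v)) := by positivity
    have hYZ : T ^ (p - 1) * (K * (u * v)) ≤ T ^ (p - 1) * (K * (u ^ 2 + v ^ 2)) := by
      gcongr
      nlinarith [sq_nonneg (u - v), sq_nonneg u, sq_nonneg v]
    nlinarith
  · refine ⟨(N : ℝ) + 1, by linarith, ?_⟩
    intro d T u v hT hu hv huT hvT
    have hd1 : (d : ℝ) ^ (α - (N : ℝ)) ≤ 1 := by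
      rcases Nat.eq_zero_or_pos d with h | h
      · subst h
        rw [Nat.cast_zero, Real.zero_rpow (by linarith)]
        norm_num
      · exact Real.rpow_le_one_of_one_le_of_nonpos (by exact_mod_cast h) (by linarith)
    have aux : ∀ w : ℝ, 0 ≤ w → w ^ 2 ≤ T → w ^ p ≤ T ^ ((p - 2) / 2) * w ^ 2 := by
      intro w hw hwT
      have : w ^ p = (w ^ 2) ^ ((p - 2) / 2) * w ^ 2 := by
        rw [← Real.rpow_natCast w 2, ← Real.rpow_mul hw,
          ← Real.rpow_add_of_nonneg hw (by push_cast; linarith) (by norm_num)]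
        congr 1
        push_cast
        ring
      rw [this]
      gcongr
    have hTT : T ^ ((p - 2) / 2) * T ^ ((p - 2) / 2) = T ^ (p - 2) := by
      rw [← Real.rpow_add hT]; ring_nf
    have h1 : (d : ℝ) ^ (α - (N : ℝ)) * (u ^ p * v ^ p) ≤ 1 *
        ((T ^ ((p - 2) / 2) * u ^ 2) * (T ^ ((p - 2) / 2) * v ^ 2)) := by
      gcongr
      · exact aux u hu huT
      · exact aux v hv hvT
    have h2 : 0 ≤ T ^ (p - 1) * ((d : ℝ) ^ (-((N : ℝ) + 1)) * (u ^ 2 + v ^ 2)) := by positivity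
    have h3 : 1 * ((T ^ ((p - 2) / 2) * u ^ 2) * (T ^ ((p - 2) / 2) * v ^ 2))
        = T ^ (p - 2) * (u ^ 2 * v ^ 2) := by
      rw [← hTT]; ring
    linarith

/-- Polynomial growth makes `|h|^{-β}` summable for `β > N`. -/
lemma growth_sum [Group G] (S : Finset G) (N : ℕ) (hg : PolyGrowth S N) (β : ℝ) (hβ : (N : ℝ) < β) :
    ∃ M : ℝ, 0 ≤ M ∧
      ∑' h : G, ENNReal.ofReal ((wordDist S h 1 : ℝ) ^ (-β)) ≤ ENNReal.ofReal M := by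
  classical
  obtain ⟨C₁, C₂, hC1, hC2, hC⟩ := hg
  have hβ0 : 0 < β := lt_of_le_of_lt (Nat.cast_nonneg N) hβ
  -- geometric majorant
  let q : ℝ := 2 ^ ((N : ℝ) - β)
  have hq0 : 0 < q := by positivity
  have hq1 : q < 1 := Real.rpow_lt_one_of_one_lt_of_neg (by norm_num) (by linarith)
  have hsum : Summable fun k : ℕ => C₂ * 2 ^ β * q ^ k :=
    (summable_geometric_of_lt_one hq0.le hq1).mul_left _
  have hball : ∀ k : ℕ, ∑' h : G, (if h ∈ ball S (1 : G) ((2 : ℝ) ^ k) then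
      ENNReal.ofReal (2 ^ β * ((2 : ℝ) ^ k) ^ (-β)) else 0) ≤ ENNReal.ofReal (C₂ * 2 ^ β * q ^ k) := by
    intro k
    have hr : (1 : ℝ) ≤ 2 ^ k := one_le_pow₀ (by norm_num)
    obtain ⟨hl, hu⟩ := hC _ hr
    have hpos : (0 : ℝ) < ((ball S (1 : G) ((2 : ℝ) ^ k)).ncard : ℝ) :=
      lt_of_lt_of_le (by positivity) hl
    have hfin : (ball S (1 : G) ((2 : ℝ) ^ k)).Finite := by
      apply Set.finite_of_ncard_pos
      exact_mod_cast hpos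
    rw [tsum_eq_sum (s := hfin.toFinset) (by intro b hb; simp at hb; simp [hb])]
    rw [Finset.sum_congr rfl (g := fun _ => ENNReal.ofReal (2 ^ β * ((2 : ℝ) ^ k) ^ (-β)))
      (by intro b hb; simp at hb; simp [hb])]
    rw [Finset.sum_const, nsmul_eq_mul, ← Set.ncard_eq_toFinset_card _ hfin,
      ← ENNReal.ofReal_natCast, ← ENNReal.ofReal_mul (by positivity)]
    apply ENNReal.ofReal_le_ofReal
    have : q ^ k = ((2 : ℝ) ^ k) ^ N * ((2 : ℝ) ^ k) ^ (-β) := by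
      have h2 : (0 : ℝ) < 2 ^ k := by positivity
      rw [← Real.rpow_natCast ((2 : ℝ) ^ k) N, ← Real.rpow_add h2, ← sub_eq_add_neg,
        ← Real.rpow_natCast q k, ← Real.rpow_natCast 2 k, ← Real.rpow_mul (by norm_num),
        ← Real.rpow_mul (by norm_num), mul_comm]
    rw [this]
    calc _ ≤ C₂ * ((2 : ℝ) ^ k) ^ N * (2 ^ β * ((2 : ℝ) ^ k) ^ (-β)) := by gcongr
      _ = _ := by ring
  refine ⟨∑' k : ℕ, C₂ * 2 ^ β * q ^ k, tsum_nonneg (fun k => by positivity), ?_⟩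
  calc ∑' h : G, ENNReal.ofReal ((wordDist S h 1 : ℝ) ^ (-β))
      ≤ ∑' h : G, ∑' k : ℕ, (if h ∈ ball S (1 : G) ((2 : ℝ) ^ k) then
          ENNReal.ofReal (2 ^ β * ((2 : ℝ) ^ k) ^ (-β)) else 0) := by
        refine ENNReal.tsum_le_tsum fun h => ?_
        rcases Nat.eq_zero_or_pos (wordDist S h 1) with h0 | h0
        · rw [h0, Nat.cast_zero, Real.zero_rpow (by linarith)]
          simp
        · let m := wordDist S h 1
          refine le_trans ?_ (ENNReal.le_tsum (Nat.log 2 m + 1))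
          have hlt : (m : ℝ) ≤ (2 : ℝ) ^ (Nat.log 2 m + 1) := by
            exact_mod_cast (Nat.lt_pow_succ_log_self (by norm_num) m).le
          have hge : (2 : ℝ) ^ (Nat.log 2 m) ≤ (m : ℝ) := by
            exact_mod_cast Nat.pow_log_le_self 2 (by omega)
          rw [if_pos (show h ∈ ball S (1 : G) _ from hlt)]
          apply ENNReal.ofReal_le_ofReal
          have h3 : (2 : ℝ) ^ β * ((2 : ℝ) ^ (Nat.log 2 m + 1)) ^ (-β)
              = ((2 : ℝ) ^ (Nat.log 2 m)) ^ (-β) := by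
            rw [pow_succ, Real.mul_rpow (by positivity) (by norm_num), mul_comm, mul_assoc,
              ← Real.rpow_add (by norm_num)]
            simp
          rw [h3]
          exact Real.rpow_le_rpow_of_nonpos (by positivity) hge (by linarith)
    _ = ∑' k : ℕ, ∑' h : G, (if h ∈ ball S (1 : G) ((2 : ℝ) ^ k) then
          ENNReal.ofReal (2 ^ β * ((2 : ℝ) ^ k) ^ (-β)) else 0) := ENNReal.tsum_comm
    _ ≤ ∑' k : ℕ, ENNReal.ofReal (C₂ * 2 ^ β * q ^ k) := ENNReal.tsum_le_tsum hball
    _ = _ := (ENNReal.ofReal_tsum_of_nonneg (fun k => by positivity) hsum).symm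

/-- The nonlocal estimate. -/
lemma Dterm_le [Group G] [DecidableEq G] (S : Finset G) 
    (N : ℕ) (hN : 2 ≤ N) (hgrowth : PolyGrowth S N)
    (α : ℝ) (hα0 : 0 < α) (hαN : α < (N : ℝ))
    (R : G → G → ℝ) (hR : RieszKernel S N α R)
    (p : ℝ) (hp : ((N : ℝ) + α) / (N : ℝ) < p) :
    ∃ C : ℝ, 0 < C ∧ ∀ (T : ℝ) (u : G → ℝ), 0 < T → Summable (fun x => u x ^ 2) →
      ∑' x, u x ^ 2 ≤ T → Dterm R p u ≤ C * T ^ p := by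
  obtain ⟨hR0, c₁, c₂, hc1, hc2, hRR⟩ := hR
  obtain ⟨β, hβ, hpt⟩ := pointwise_bound_s13 N α p hN hαN hα0 hp
  obtain ⟨M, hM0, hM⟩ := growth_sum S N hgrowth β hβ
  refine ⟨c₂ * (1 + 2 * M), by positivity, ?_⟩
  intro T u hT hs hsT
  have huT : ∀ x, |u x| ^ 2 ≤ T := fun x => by
    rw [sq_abs]
    exact (hs.le_tsum x (fun j _ => sq_nonneg _)).trans hsT
  let U : G → ℝ≥0∞ := fun x => ENNReal.ofReal (u x ^ 2)
  have hU : ∑' x, U x ≤ ENNReal.ofReal T := by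
    rw [← ENNReal.ofReal_tsum_of_nonneg (fun x => sq_nonneg _) hs]
    exact ENNReal.ofReal_le_ofReal hsT
  let L : G → G → ℝ≥0∞ := fun x y => ENNReal.ofReal ((wordDist S x y : ℝ) ^ (-β))
  have hwd : ∀ x y : G, wordDist S x y = wordDist S (y⁻¹ * x) 1 := by
    intro x y; unfold wordDist; simp
  have hL1 : ∀ x, ∑' y, L x y ≤ ENNReal.ofReal M := by
    intro x
    refine le_trans (le_of_eq ?_) hM
    have := ((Equiv.inv G).trans (Equiv.mulRight x)).tsum_eq
      (fun h => ENNReal.ofReal ((wordDist S h 1 : ℝ) ^ (-β)))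
    rw [← this]
    refine tsum_congr fun y => ?_
    simp only [L]
    rw [hwd x y]
    rfl
  have hL2 : ∀ y, ∑' x, L x y ≤ ENNReal.ofReal M := by
    intro y
    refine le_trans (le_of_eq ?_) hM
    have := (Equiv.mulLeft y⁻¹).tsum_eq
      (fun h => ENNReal.ofReal ((wordDist S h 1 : ℝ) ^ (-β)))
    rw [← this]
    refine tsum_congr fun x => ?_
    simp only [L]
    rw [hwd x y]
    rfl
  let A := ENNReal.ofReal (c₂ * T ^ (p - 2))
  let B := ENNReal.ofReal (c₂ * T ^ (p - 1))
  have hterm : ∀ x y, ENNReal.ofReal (if y = x then 0 else R x y * |u y| ^ p) *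
      ENNReal.ofReal (|u x| ^ p) ≤ A * (U x * U y) + B * (L x y * U x + L x y * U y) := by
    intro x y
    by_cases hxy : y = x
    · simp [hxy]
    rw [if_neg hxy]
    have h1 := hpt (wordDist S x y) T |u x| |u y| hT (abs_nonneg _) (abs_nonneg _) (huT x) (huT y)
    have h2 := (hRR x y (Ne.symm hxy)).2
    rw [← ENNReal.ofReal_mul (mul_nonneg (hR0 x y).le (by positivity))]
    simp only [A, B, U, L]
    rw [← ENNReal.ofReal_mul (by positivity), ← ENNReal.ofReal_mul (by positivity),
      ← ENNReal.ofReal_mul (by positivity), ← ENNReal.ofReal_mul (by positivity),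
      ← ENNReal.ofReal_add (by positivity) (by positivity),
      ← ENNReal.ofReal_mul (by positivity),
      ← ENNReal.ofReal_add (by positivity) (by positivity)]
    apply ENNReal.ofReal_le_ofReal
    simp only [sq_abs] at h1
    calc R x y * |u y| ^ p * |u x| ^ p
        ≤ (c₂ * (wordDist S x y : ℝ) ^ (α - (N : ℝ))) * |u y| ^ p * |u x| ^ p := by gcongr
      _ = c₂ * ((wordDist S x y : ℝ) ^ (α - (N : ℝ)) * (|u x| ^ p * |u y| ^ p)) := by ring
      _ ≤ c₂ * _ := mul_le_mul_of_nonneg_left h1 hc2.le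
      _ = _ := by ring
  have hin : ∀ x, ENNReal.ofReal (conv R (fun y => |u y| ^ p) x * |u x| ^ p) ≤
      ∑' y, (A * (U x * U y) + B * (L x y * U x + L x y * U y)) := by
    intro x
    rw [ENNReal.ofReal_mul' (by positivity)]
    calc _ ≤ (∑' y, ENNReal.ofReal (if y = x then 0 else R x y * |u y| ^ p)) *
          ENNReal.ofReal (|u x| ^ p) := by
          gcongr
          apply ofReal_tsum_le
          intro y
          split_ifs
          · exact le_rfl
          · exact mul_nonneg (hR0 x y).le (by positivity)
      _ = ∑' y, ENNReal.ofReal (if y = x then 0 else R x y * |u y| ^ p) *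
          ENNReal.ofReal (|u x| ^ p) := ENNReal.tsum_mul_right.symm
      _ ≤ _ := ENNReal.tsum_le_tsum (hterm x)
  have hnn : ∀ x, 0 ≤ conv R (fun y => |u y| ^ p) x * |u x| ^ p := by
    intro x
    refine mul_nonneg (tsum_nonneg fun y => ?_) (by positivity)
    split_ifs
    · exact le_rfl
    · exact mul_nonneg (hR0 x y).le (by positivity)
  have hP1 : ∑' x, ∑' y, U x * U y ≤ ENNReal.ofReal T * ENNReal.ofReal T := by
    simp_rw [ENNReal.tsum_mul_left, ENNReal.tsum_mul_right]
    gcongr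
  have hP2 : ∑' x, ∑' y, L x y * U x ≤ ENNReal.ofReal M * ENNReal.ofReal T := by
    simp_rw [ENNReal.tsum_mul_right]
    calc _ ≤ ∑' x, ENNReal.ofReal M * U x := ENNReal.tsum_le_tsum fun x => by gcongr; exact hL1 x
      _ = ENNReal.ofReal M * ∑' x, U x := ENNReal.tsum_mul_left
      _ ≤ _ := by gcongr
  have hP3 : ∑' x, ∑' y, L x y * U y ≤ ENNReal.ofReal M * ENNReal.ofReal T := by
    rw [ENNReal.tsum_comm]
    simp_rw [ENNReal.tsum_mul_right]
    calc _ ≤ ∑' x, ENNReal.ofReal M * U x := ENNReal.tsum_le_tsum fun x => by gcongr; exact hL2 x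
      _ = ENNReal.ofReal M * ∑' x, U x := ENNReal.tsum_mul_left
      _ ≤ _ := by gcongr
  have hfinal : ENNReal.ofReal (Dterm R p u) ≤ ENNReal.ofReal (c₂ * (1 + 2 * M) * T ^ p) := by
    calc ENNReal.ofReal (Dterm R p u)
        ≤ ∑' x, ENNReal.ofReal (conv R (fun y => |u y| ^ p) x * |u x| ^ p) := ofReal_tsum_le _ hnn
      _ ≤ ∑' x, ∑' y, (A * (U x * U y) + B * (L x y * U x + L x y * U y)) :=
          ENNReal.tsum_le_tsum hin
      _ = A * (∑' x, ∑' y, U x * U y) + B * ((∑' x, ∑' y, L x y * U x)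
            + ∑' x, ∑' y, L x y * U y) := by
          simp_rw [ENNReal.tsum_add, ENNReal.tsum_mul_left (a := A), ENNReal.tsum_mul_left (a := B),
            ENNReal.tsum_add]
      _ ≤ A * (ENNReal.ofReal T * ENNReal.ofReal T) + B * (ENNReal.ofReal M * ENNReal.ofReal T
            + ENNReal.ofReal M * ENNReal.ofReal T) := by gcongr
      _ = _ := by
          simp only [A, B]
          rw [← ENNReal.ofReal_mul (by positivity), ← ENNReal.ofReal_mul (by positivity),
            ← ENNReal.ofReal_mul (by positivity),
            ← ENNReal.ofReal_add (by positivity) (by positivity),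
            ← ENNReal.ofReal_mul (by positivity),
            ← ENNReal.ofReal_add (by positivity) (by positivity)]
          congr 1
          have e1 : T ^ p = T ^ (p - 2) * (T * T) := by
            rw [← sq, ← Real.rpow_natCast T 2, ← Real.rpow_add hT]; congr 1; push_cast; ring
          have e2 : T ^ p = T ^ (p - 1) * T := by
            rw [← Real.rpow_add_one hT.ne']; congr 1; ring
          linear_combination (-c₂) * e1 + (-2 * c₂ * M) * e2
  exact (ENNReal.ofReal_le_ofReal_iff (by positivity)).1 hfinal

lemma grad_self_nonneg [Group G] (S : Finset G) (u : G → ℝ) (x : G) : 0 ≤ grad S u u x := by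
  unfold grad
  exact mul_nonneg (by norm_num) (Finset.sum_nonneg fun s _ => mul_self_nonneg _)

lemma sq_le_eDensity [Group G] (S : Finset G) (a : G → ℝ) (ha : ∀ x, 0 ≤ a x)
    (lam : ℝ) (hlam : 0 < lam) (u : G → ℝ) (x : G) : u x ^ 2 ≤ eDensity S a lam u x := by
  unfold eDensity
  have h1 := grad_self_nonneg S u x
  have h2 : 0 ≤ lam * a x * u x ^ 2 := mul_nonneg (mul_nonneg hlam.le (ha x)) (sq_nonneg _)
  nlinarith [sq_nonneg (lap S u x)]

lemma eDensity_smul [Group G] (S : Finset G) (a : G → ℝ) (lam t : ℝ) (u : G → ℝ) :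
    eDensity S a lam (fun x => t * u x) = fun x => t ^ 2 * eDensity S a lam u x := by
  funext x
  have h1 : lap S (fun x => t * u x) x = t * lap S u x := by
    unfold lap
    rw [Finset.mul_sum]
    exact Finset.sum_congr rfl fun s _ => by ring
  have h2 : grad S (fun x => t * u x) (fun x => t * u x) x = t ^ 2 * grad S u u x := by
    unfold grad
    rw [Finset.mul_sum, Finset.mul_sum, Finset.mul_sum]
    exact Finset.sum_congr rfl fun s _ => by ring
  unfold eDensity
  rw [h1, h2]
  ring

lemma Dterm_smul [DecidableEq G] (R : G → G → ℝ) (p t : ℝ) (ht : 0 < t) (u : G → ℝ) :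
    Dterm R p (fun x => t * u x) = t ^ (2 * p) * Dterm R p u := by
  have h : ∀ x, |t * u x| ^ p = t ^ p * |u x| ^ p := fun x => by
    rw [abs_mul, abs_of_pos ht, Real.mul_rpow ht.le (abs_nonneg _)]
  have hc : ∀ x, conv R (fun y => |t * u y| ^ p) x = t ^ p * conv R (fun y => |u y| ^ p) x := by
    intro x
    unfold conv
    rw [← tsum_mul_left]
    refine tsum_congr fun y => ?_
    simp only [h]
    split_ifs
    · simp
    · ring
  unfold Dterm
  rw [← tsum_mul_left]
  refine tsum_congr fun x => ?_
  rw [hc, h, two_mul, Real.rpow_add ht]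
  ring

lemma Dterm_pos [DecidableEq G] (R : G → G → ℝ) (hR0 : ∀ x y, 0 < R x y) (p : ℝ) (hp : 0 < p)
    (e g : G) (heg : e ≠ g) :
    0 < Dterm R p (fun x => if x = e ∨ x = g then 1 else 0) := by
  set v : G → ℝ := fun x => if x = e ∨ x = g then 1 else 0 with hv
  have hv0 : ∀ x, x ∉ ({e, g} : Finset G) → |v x| ^ p = 0 := by
    intro x hx
    have : v x = 0 := by simp at hx; simp [hv, hx]
    rw [this]; simp [hp.ne']
  have hnnt : ∀ x y, 0 ≤ (if y = x then 0 else R x y * |v y| ^ p) := by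
    intro x y
    split_ifs
    · exact le_rfl
    · exact mul_nonneg (hR0 x y).le (by positivity)
  have hnn : ∀ x, 0 ≤ conv R (fun y => |v y| ^ p) x * |v x| ^ p := fun x =>
    mul_nonneg (tsum_nonneg (hnnt x)) (by positivity)
  have hs1 : Summable (fun y => if y = e then 0 else R e y * |v y| ^ p) := by
    apply summable_of_ne_finset_zero (s := {e, g})
    intro y hy
    rw [hv0 y hy]; simp
  have hs2 : Summable (fun x => conv R (fun y => |v y| ^ p) x * |v x| ^ p) := by
    apply summable_of_ne_finset_zero (s := {e, g})
    intro y hy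
    rw [hv0 y hy]; simp
  have h1 := hs1.le_tsum g (fun y _ => hnnt e y)
  have h2 := hs2.le_tsum e (fun y _ => hnn y)
  have hve : v e = 1 := by simp [hv]
  have hvg : v g = 1 := by simp [hv]
  rw [hve] at h2
  rw [if_neg heg.symm, hvg] at h1
  simp only [abs_one, Real.one_rpow, mul_one] at h1 h2
  exact lt_of_lt_of_le (hR0 e g) (h1.trans h2)

lemma MemE_pair [Group G] [DecidableEq G] (S : Finset G) (a : G → ℝ) (lam : ℝ) (e g : G) :
    MemE S a lam (fun x => if x = e ∨ x = g then 1 else 0) := by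
  set v : G → ℝ := fun x => if x = e ∨ x = g then 1 else 0 with hv
  let P : Finset G := {e, g}
  have hv0 : ∀ x, x ∉ P → v x = 0 := by
    intro x hx
    simp [P] at hx; simp [hv, hx]
  apply summable_of_ne_finset_zero (s := P ∪ (P ×ˢ S).image (fun z => z.1 * z.2⁻¹))
  intro x hx
  rw [Finset.mem_union, not_or] at hx
  have h0 := hv0 x hx.1
  have h1 : ∀ s ∈ S, v (x * s) = 0 := by
    intro s hs
    apply hv0
    intro hxs
    apply hx.2
    rw [Finset.mem_image]
    exact ⟨(x * s, s), by simp [hxs, hs], by simp⟩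
  have h2 : lap S v x = 0 := Finset.sum_eq_zero fun s hs => by rw [h1 s hs, h0]; simp
  have h3 : grad S v v x = 0 := by
    unfold grad
    rw [Finset.sum_eq_zero fun s hs => by rw [h1 s hs, h0]; simp]
    simp
  simp [eDensity, h0, h2, h3]

lemma exists_ne_of_growth [Group G] (S : Finset G) (N : ℕ) (hN : 2 ≤ N) (hg : PolyGrowth S N) :
    ∃ g : G, (1 : G) ≠ g := by
  by_contra h
  push Not at h
  obtain ⟨C₁, C₂, hC1, hC2, hC⟩ := hg
  have hr : (1 : ℝ) ≤ 1 + 1 / C₁ := by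
    have : 0 < 1 / C₁ := by positivity
    linarith
  have h1 := (hC _ hr).1
  have h2 : (ball S (1 : G) (1 + 1 / C₁)).ncard ≤ 1 := by
    haveI : Subsingleton G := ⟨fun x y => (h x).symm.trans (h y)⟩
    exact Set.ncard_le_one_of_subsingleton _
  have h3 : ((ball S (1 : G) (1 + 1 / C₁)).ncard : ℝ) ≤ 1 := by exact_mod_cast h2
  have h4 : 1 + 1 / C₁ ≤ (1 + 1 / C₁) ^ N := le_self_pow₀ hr (by omega)
  have h5 : C₁ * (1 + 1 / C₁) = C₁ + 1 := by field_simp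
  nlinarith [mul_le_mul_of_nonneg_left h4 hC1.le]

theorem mountain_pass_geometry
    {G : Type*} [Group G] [Countable G] [DecidableEq G]
    (S : Finset G) (hSsymm : ∀ s ∈ S, s⁻¹ ∈ S)
    (hSgen : Subgroup.closure (S : Set G) = ⊤)
    (N : ℕ) (hN : 2 ≤ N) (hgrowth : PolyGrowth S N)
    (α : ℝ) (hα0 : 0 < α) (hαN : α < (N : ℝ))
    (R : G → G → ℝ) (hR : RieszKernel S N α R)
    (p : ℝ) (hp : ((N : ℝ) + α) / (N : ℝ) < p)
    (a : G → ℝ) (ha : ∀ x, 0 ≤ a x)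
    (lam : ℝ) (hlam : 0 < lam) :
    ∃ θ ρ : ℝ, 0 < θ ∧ 0 < ρ ∧
      (∀ u : G → ℝ, MemE S a lam u → normE S a lam u = ρ → θ ≤ Jfun S a lam R p u) ∧
      ∃ w : G → ℝ, MemE S a lam w ∧ ρ < normE S a lam w ∧ Jfun S a lam R p w < 0 := by
  have hN0 : (0 : ℝ) < N := by positivity
  have hp1 : 1 < p := by
    refine lt_of_le_of_lt ?_ hp
    rw [le_div_iff₀ hN0]; linarith
  obtain ⟨C, hC0, hC⟩ := Dterm_le S N hN hgrowth α hα0 hαN R hR p hp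
  obtain ⟨T, hT0, hT⟩ : ∃ T : ℝ, 0 < T ∧ C * T ^ (p - 1) = p / 2 := by
    refine ⟨(p / (2 * C)) ^ (1 / (p - 1)), by positivity, ?_⟩
    rw [← Real.rpow_mul (by positivity), one_div_mul_cancel (by linarith), Real.rpow_one]
    field_simp
  refine ⟨T / 4, Real.sqrt T, by positivity, Real.sqrt_pos.2 hT0, ?_, ?_⟩
  · intro u hu hun
    have hnn : ∀ x, 0 ≤ eDensity S a lam u x := fun x =>
      (sq_nonneg _).trans (sq_le_eDensity S a ha lam hlam u x)
    have hsq : normEsq S a lam u = T :=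
      (Real.sqrt_inj (tsum_nonneg hnn) hT0.le).1 hun
    have hs : Summable (fun x => u x ^ 2) :=
      Summable.of_nonneg_of_le (fun x => sq_nonneg _) (sq_le_eDensity S a ha lam hlam u) hu
    have hle : ∑' x, u x ^ 2 ≤ T :=
      (hs.tsum_le_tsum (sq_le_eDensity S a ha lam hlam u) hu).trans hsq.le
    have hD := hC T u hT0 hs hle
    have e2 : T ^ p = T ^ (p - 1) * T := by
      rw [← Real.rpow_add_one hT0.ne']; congr 1; ring
    have hD2 : Dterm R p u ≤ p / 2 * T := by
      rw [← hT]; rw [e2] at hD; linarith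
    unfold Jfun
    rw [hsq]
    have h3 : 1 / (2 * p) * Dterm R p u ≤ 1 / (2 * p) * (p / 2 * T) := by gcongr
    have h4 : 1 / (2 * p) * (p / 2 * T) = T / 4 := by field_simp; norm_num
    linarith
  · obtain ⟨g, hg⟩ := exists_ne_of_growth S N hN hgrowth
    have hDp := Dterm_pos R hR.1 p (by linarith) 1 g hg
    have hM := MemE_pair S a lam 1 g
    set v : G → ℝ := fun x => if x = 1 ∨ x = g then 1 else 0 with hv
    set D := Dterm R p v with hDdef
    set n := normEsq S a lam v with hn
    have hnn : ∀ x, 0 ≤ eDensity S a lam v x := fun x =>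
      (sq_nonneg _).trans (sq_le_eDensity S a ha lam hlam v x)
    have hn1 : 1 ≤ n := by
      have h1 := hM.le_tsum 1 (fun x _ => hnn x)
      have h2 := sq_le_eDensity S a ha lam hlam v 1
      have h3 : v 1 = 1 := by simp [hv]
      rw [h3] at h2
      have : (1 : ℝ) ^ 2 ≤ n := h2.trans h1
      linarith
    have ht : Tendsto (fun t : ℝ => t ^ (2 * p - 2)) atTop atTop :=
      tendsto_rpow_atTop (by linarith)
    obtain ⟨t, ht1, ht2, ht3⟩ := ((ht.eventually_gt_atTop (p * n / D)).and
      ((eventually_gt_atTop (0 : ℝ)).and (eventually_gt_atTop (Real.sqrt T)))).exists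
    have hN2 : normEsq S a lam (fun x => t * v x) = t ^ 2 * n := by
      rw [hn]
      unfold normEsq
      rw [eDensity_smul, tsum_mul_left]
    refine ⟨fun x => t * v x, ?_, ?_, ?_⟩
    · unfold MemE
      rw [eDensity_smul]
      exact hM.mul_left _
    · unfold normE
      rw [hN2]
      refine ht3.trans_le (Real.le_sqrt_of_sq_le ?_)
      nlinarith [sq_nonneg t]
    · unfold Jfun
      rw [hN2, Dterm_smul R p t ht2, ← hDdef]
      have e : t ^ (2 * p) = t ^ (2 * p - 2) * t ^ 2 := by
        rw [← Real.rpow_natCast t 2, ← Real.rpow_add ht2]; congr 1; push_cast; ring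
      rw [div_lt_iff₀ hDp] at ht1
      have h5 : 1 / (2 * p) * (p * n * t ^ 2) < 1 / (2 * p) * (t ^ (2 * p - 2) * D * t ^ 2) := by
        gcongr
      have h6 : 1 / (2 * p) * (p * n * t ^ 2) = 1 / 2 * (t ^ 2 * n) := by field_simp
      rw [e]
      nlinarith

end Choquard
end
end
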